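/- arXiv:0803.3487 — 2 statements merged into one kernel-verified Lean document; each statement's English description precedes it below -/
import Mathlib

section
/- Let k be a fixed nonzero integer. For every ε > 0 there exists a constant C = C(k, ε) > 0 such that for every odd integer q ≥ 3, |N_q((2,2), (0,0); (k,k)) + N_q((2,2), (1,1); (k,k)) − φ(q)/2| ≤ C · q^{1/2 + ε}. In other words, the number of n ∈ U_q for which the smallest nonnegative residues modulo q of n^k and of its modular inverse n^{−k} have the same parity equals φ(q)/2 + O(q^{1/2 + ε}). -/
open scoped Classical

/-- `lehmerCount q m a k` is the quantity `N_q(m, a; k)`: the number of units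
`n ∈ U_q = {1 ≤ n < q : gcd(n,q) = 1}` such that for every `j` the smallest
nonnegative residue of `n^{k j}` modulo `q` (negative exponents being interpreted
via the modular inverse of `n`) is congruent to `a j` modulo `m j`. -/
noncomputable def lehmerCount (q : ℕ) [NeZero q] {s : ℕ} (m : Fin s → ℕ) (a : Fin s → ℤ)
    (k : Fin s → ℤ) : ℕ :=
  (Finset.univ.filter fun n : (ZMod q)ˣ =>
    ∀ j, ((((n ^ k j : (ZMod q)ˣ) : ZMod q).val : ℤ)) ≡ a j [ZMOD (m j : ℤ)]).card

section

open Polynomial in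
theorem sum_ne_zero_of_natDegree_inj {K ι : Type*} [Field K] [Fintype ι] (v : ι → K[X])
    (hv : ∀ i, v i ≠ 0) (hinj : Function.Injective fun i => (v i).natDegree) (c : ι → K)
    (hc : c ≠ 0) : ∑ i, C (c i) * v i ≠ 0 := by
  obtain ⟨j, hj⟩ := Function.ne_iff.1 hc
  obtain ⟨i0, hi0, hmax⟩ := Finset.exists_max_image (Finset.univ.filter fun i => c i ≠ 0)
    (fun i => (v i).natDegree) ⟨j, by simpa using hj⟩
  intro h
  have h2 := congrArg (fun P => P.coeff (v i0).natDegree) h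
  simp only [finsetSum_coeff, coeff_C_mul, coeff_zero] at h2
  rw [Finset.sum_eq_single i0] at h2
  · rcases mul_eq_zero.1 h2 with h3 | h3
    · exact (Finset.mem_filter.1 hi0).2 h3
    · exact hv i0 (leadingCoeff_eq_zero.1 h3)
  · intro i _ hi
    by_cases hci : c i = 0
    · simp [hci]
    · have := hmax i (by simp [hci])
      have hne : (v i).natDegree ≠ (v i0).natDegree := fun h => hi (hinj h)
      rw [coeff_eq_zero_of_natDegree_lt (by omega), mul_zero]
  · simp

open Polynomial in
theorem exists_relation_of_natDegree_lt {K ι : Type*} [Field K] [Fintype ι] (w : ι → K[X]) (L : ℕ)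
    (hw : ∀ i, (w i).natDegree < L) (hL : L < Fintype.card ι) :
    ∃ e : ι → K, e ≠ 0 ∧ ∑ i, C (e i) * w i = 0 := by
  let f : (ι → K) →ₗ[K] (Fin L → K) :=
    { toFun := fun e j => ∑ i, e i * (w i).coeff j
      map_add' := by intro x y; ext j; simp [add_mul, Finset.sum_add_distrib]
      map_smul' := by intro x y; ext j; simp [mul_assoc, Finset.mul_sum] }
  have hk : LinearMap.ker f ≠ ⊥ := by
    apply LinearMap.ker_ne_bot_of_finrank_lt
    simpa using hL
  obtain ⟨e, he, hne⟩ := (Submodule.ne_bot_iff _).1 hk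
  refine ⟨e, hne, ?_⟩
  ext n
  simp only [finsetSum_coeff, coeff_C_mul, coeff_zero]
  by_cases hn : n < L
  · exact congrFun (LinearMap.mem_ker.1 he) ⟨n, hn⟩
  · refine Finset.sum_eq_zero fun i _ => ?_
    rw [coeff_eq_zero_of_natDegree_lt (by have := hw i; omega), mul_zero]

open Polynomial in
theorem stepanov_H {K : Type*} [Field K] (p d n : ℕ) (hp : 2 ≤ p) (hd : 1 ≤ d) (a b : K)
    (ha : a ≠ 0) :
    ∃ H : K[X], H.natDegree = 2 * (d * p ^ n) ∧ H ≠ 0 ∧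
      ∀ x : K, x ≠ 0 → H.eval x = x ^ (d * p ^ n) *
        ∑ i ∈ Finset.range (n + 1), (a * x ^ d + b * (x⁻¹) ^ d) ^ (p ^ i) := by
  let T : ℕ → K[X] := fun i => X ^ (d * p ^ n - d * p ^ i) * (C a * X ^ (2 * d) + C b) ^ (p ^ i)
  have hdeg : (C a * X ^ (2 * d) + C b).natDegree = 2 * d := by
    rw [natDegree_add_C, natDegree_C_mul_X_pow _ _ ha]
  have hT : ∀ i, i ≤ n → (T i).natDegree = d * p ^ n + d * p ^ i := by
    intro i hi
    have h1 : d * p ^ i ≤ d * p ^ n := Nat.mul_le_mul_left _ (Nat.pow_le_pow_right (by omega) hi)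
    have h0 : (C a * X ^ (2 * d) + C b) ≠ 0 := by
      intro h; rw [h] at hdeg; simp at hdeg; omega
    simp only [T]
    rw [natDegree_mul (by simp) (pow_ne_zero _ h0), natDegree_X_pow, natDegree_pow, hdeg]
    have : p ^ i * (2 * d) = 2 * (d * p ^ i) := by ring
    omega
  have hD : 0 < d * p ^ n := by positivity
  have hlow : (∑ i ∈ Finset.range n, T i).natDegree < (T n).natDegree := by
    refine lt_of_le_of_lt (natDegree_sum_le_of_forall_le (n := (T n).natDegree - 1) _ _ ?_) ?_
    · intro i hi
      have hi := Finset.mem_range.1 hi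
      rw [hT i hi.le, hT n le_rfl]
      have : d * p ^ i < d * p ^ n := Nat.mul_lt_mul_of_pos_left (Nat.pow_lt_pow_right (by omega) hi) (by omega)
      omega
    · rw [hT n le_rfl]; omega
  have hdH : (∑ i ∈ Finset.range (n + 1), T i).natDegree = 2 * (d * p ^ n) := by
    rw [Finset.sum_range_succ, natDegree_add_eq_right_of_natDegree_lt hlow, hT n le_rfl]; ring
  refine ⟨∑ i ∈ Finset.range (n + 1), T i, hdH, ?_, ?_⟩
  · intro h; rw [h] at hdH; simp at hdH; omega
  · intro x hx
    rw [eval_finsetSum, Finset.mul_sum]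
    refine Finset.sum_congr rfl fun i hi => ?_
    have hi : i ≤ n := by have := Finset.mem_range.1 hi; omega
    have h1 : d * p ^ i ≤ d * p ^ n := Nat.mul_le_mul_left _ (Nat.pow_le_pow_right (by omega) hi)
    simp only [T, eval_mul, eval_pow, eval_X, eval_add, eval_C]
    have h2 : a * x ^ (2 * d) + b = x ^ d * (a * x ^ d + b * (x⁻¹) ^ d) := by
      rw [inv_pow]; field_simp; ring
    rw [h2, mul_pow, ← mul_assoc, ← pow_mul, ← pow_add, Nat.sub_add_cancel h1]

open Polynomial in
theorem stepanov (p : ℕ) [Fact p.Prime] {K : Type*} [Field K] [Fintype K] [CharP K p]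
    (n d : ℕ) (hcard : Fintype.card K = p ^ (2 * (n + 1))) (hd : 1 ≤ d) (hpd : ¬ p ∣ d)
    (hbig : 2 * d + 2 < p ^ (n + 1)) (a b s : K) (ha : a ≠ 0) :
    (Finset.univ.filter fun x : K => x ≠ 0 ∧
      ∑ i ∈ Finset.range (2 * (n + 1)), (a * x ^ d + b * (x⁻¹) ^ d) ^ (p ^ i) = s).card
      ≤ p ^ (n + 1) * p ^ n + (4 * d + 3) * p ^ (n + 1) := by
  have hp : p.Prime := Fact.out
  have hp2 := hp.two_le
  obtain ⟨H, hHdeg, hH0, hHev⟩ := stepanov_H p d n hp2 hd a b ha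
  set P := p ^ n with hP
  have hP0 : 0 < P := by positivity
  set R := p ^ (n + 1) with hR
  have hRP : R = p * P := by rw [hR, hP, pow_succ]; ring
  set D := d * P with hDdef
  let I := P + 2 * d + 2
  let ι := Fin P × Fin I × Fin p
  let v : ι → K[X] := fun t => X ^ (t.1.1 + R * t.2.1.1) * H ^ t.2.2.1 * X ^ (D * (p - 1 - t.2.2.1))
  let w : ι → K[X] := fun t =>
    X ^ (t.1.1 * R + t.2.1.1) * (C s * X ^ D - H) ^ t.2.2.1 * X ^ (D * (p - 1 - t.2.2.1))
  have hv0 : ∀ t, v t ≠ 0 := fun t => by simp [v, hH0]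
  have hvdeg : ∀ t : ι, (v t).natDegree = t.1.1 + R * t.2.1.1 + D * t.2.2.1 + D * (p - 1) := by
    rintro ⟨i, i', j⟩
    simp only [v]
    rw [natDegree_mul (by simp [hH0]) (by simp), natDegree_mul (by simp) (by simp [hH0]),
      natDegree_X_pow, natDegree_X_pow, natDegree_pow, hHdeg]
    obtain ⟨t, ht⟩ : ∃ t, p - 1 = j.1 + t := ⟨p - 1 - j.1, by omega⟩
    rw [ht, Nat.add_sub_cancel_left]; ring
  have hinj : Function.Injective fun t => (v t).natDegree := by
    rintro ⟨i, i', j⟩ ⟨k, k', l⟩ h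
    simp only [hvdeg] at h
    have h1 : i.1 + P * (p * i'.1 + d * j.1) = k.1 + P * (p * k'.1 + d * l.1) := by
      rw [hRP, hDdef] at h
      have := Nat.add_right_cancel h
      linarith [this]
    have hi : i.1 = k.1 := by
      have := congrArg (· % P) h1
      simpa [Nat.add_mul_mod_self_left, Nat.mod_eq_of_lt i.2, Nat.mod_eq_of_lt k.2] using this
    rw [hi] at h1
    have h2 : p * i'.1 + d * j.1 = p * k'.1 + d * l.1 :=
      Nat.eq_of_mul_eq_mul_left hP0 (Nat.add_left_cancel h1)
    have hj : j.1 = l.1 := by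
      have h3 : d * j.1 ≡ d * l.1 [MOD p] := by
        have := congrArg (· % p) h2
        simpa [Nat.ModEq, Nat.mul_add_mod] using this
      have h4 := Nat.ModEq.cancel_left_of_coprime ((Nat.Prime.coprime_iff_not_dvd hp).2 hpd) h3
      exact Nat.ModEq.eq_of_lt_of_lt h4 j.2 l.2
    rw [hj] at h2
    have h5 : i'.1 = k'.1 := Nat.eq_of_mul_eq_mul_left (by omega) (Nat.add_right_cancel h2)
    ext <;> simp [hi, hj, h5]
  have hwdeg : ∀ t : ι, (w t).natDegree < R * P + I + 2 * D * p := by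
    rintro ⟨i, i', j⟩
    simp only [w]
    have h1 : (C s * X ^ D - H).natDegree ≤ 2 * D := by
      refine (natDegree_sub_le _ _).trans (max_le ?_ hHdeg.le)
      refine (natDegree_C_mul_X_pow_le _ _).trans (by omega)
    have h2 : ((C s * X ^ D - H) ^ j.1).natDegree ≤ j.1 * (2 * D) :=
      natDegree_pow_le.trans (Nat.mul_le_mul_left _ h1)
    have h3 := natDegree_mul_le (p := X ^ (i.1 * R + i'.1) * (C s * X ^ D - H) ^ j.1)
      (q := X ^ (D * (p - 1 - j.1)))
    have h4 := natDegree_mul_le (p := (X : K[X]) ^ (i.1 * R + i'.1)) (q := (C s * X ^ D - H) ^ j.1)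
    rw [natDegree_X_pow] at h3 h4
    obtain ⟨t, ht⟩ : ∃ t, p = j.1 + 1 + t := ⟨p - 1 - j.1, by omega⟩
    have h5 : D * (p - 1 - j.1) = D * t := by congr 1; omega
    have h6 : 2 * D * p = 2 * D * (j.1 + 1 + t) := by rw [← ht]
    have h7 : i.1 * R ≤ R * P := by rw [mul_comm]; exact Nat.mul_le_mul_left _ i.2.le
    have h8 := i'.2
    have h9 : 2 * D * (j.1 + 1 + t) = j.1 * (2 * D) + 2 * D + 2 * (D * t) := by ring
    omega
  have hcardι : R * P + I + 2 * D * p < Fintype.card ι := by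
    have h1 : Fintype.card ι = R * I := by
      simp only [ι, Fintype.card_prod, Fintype.card_fin]
      rw [hRP]; ring
    have h2 : R * I = R * P + 2 * (d * R) + 2 * R := by simp only [I]; ring
    have h3 : 2 * D * p = 2 * (d * R) := by rw [hDdef, hRP]; ring
    have h4 : P ≤ R := by rw [hRP]; exact Nat.le_mul_of_pos_left _ (by omega)
    simp only [I] at *
    omega
  obtain ⟨e, he, hrel⟩ := exists_relation_of_natDegree_lt w _ hwdeg hcardι
  have hRR : ∀ x : K, (x ^ R) ^ R = x := by
    intro x
    rw [← pow_mul, hR, ← pow_add, show n + 1 + (n + 1) = 2 * (n + 1) by ring, ← hcard,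
      FiniteField.pow_card]
  have hadd : ∀ (t : Finset ι) (g : ι → K), (∑ i ∈ t, g i) ^ R = ∑ i ∈ t, g i ^ R :=
    fun t g => sum_pow_char_pow p _ _ _
  let c : ι → K := fun t => e t ^ R
  have hc : c ≠ 0 := by
    obtain ⟨t, ht⟩ := Function.ne_iff.1 he
    exact Function.ne_iff.2 ⟨t, pow_ne_zero _ ht⟩
  have hG := sum_ne_zero_of_natDegree_inj v hv0 hinj c hc
  set G := ∑ i, C (c i) * v i with hGdef
  have hGdeg : G.natDegree ≤ R * P + (4 * d + 3) * R := by
    refine natDegree_sum_le_of_forall_le _ _ ?_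
    rintro ⟨i, i', j⟩ -
    refine (natDegree_C_mul_le _ _).trans ?_
    rw [hvdeg]
    simp only
    have h1 : R * i'.1 ≤ R * (P + 2 * d + 1) := Nat.mul_le_mul_left _ (by have := i'.2; simp only [I] at this; omega)
    have h2 : D * j.1 ≤ D * p := Nat.mul_le_mul_left _ j.2.le
    have h3 : D * (p - 1) ≤ D * p := Nat.mul_le_mul_left _ (by omega)
    have h4 : D * p = d * R := by rw [hDdef, hRP]; ring
    have h5 := i.2
    have h6 : P ≤ R := by rw [hRP]; exact Nat.le_mul_of_pos_left _ (by omega)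
    have h7 : R * (P + 2 * d + 1) = R * P + 2 * (d * R) + R := by ring
    have h8 : (4 * d + 3) * R = 4 * (d * R) + 3 * R := by ring
    omega
  refine le_trans ?_ hGdeg
  refine le_trans (Finset.card_le_card (t := G.roots.toFinset) ?_)
    ((Multiset.toFinset_card_le _).trans (card_roots' _))
  intro x hx
  obtain ⟨hx0, hxs⟩ := (Finset.mem_filter.1 hx).2
  rw [Multiset.mem_toFinset, mem_roots hG, IsRoot.def]
  set h := ∑ i ∈ Finset.range (n + 1), (a * x ^ d + b * (x⁻¹) ^ d) ^ (p ^ i) with hh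
  have hhR : h ^ R = s - h := by
    rw [eq_sub_iff_add_eq', ← hxs, two_mul, Finset.sum_range_add, hh, sum_pow_char_pow]
    congr 1
    refine Finset.sum_congr rfl fun i _ => ?_
    rw [← pow_mul, pow_add p (n + 1) i, mul_comm (p ^ i)]
  have hHx : H.eval x = x ^ D * h := hHev x hx0
  have hsum : ∀ j : Fin p, j.1 + (p - 1 - j.1) = p - 1 := fun j => by omega
  have hE : x ^ (D * (p - 1)) * ∑ t : ι, e t * x ^ (t.1.1 * R + t.2.1.1) * (s - h) ^ t.2.2.1 = 0 := by
    have h1 := congrArg (eval x) hrel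
    rw [eval_finsetSum, eval_zero] at h1
    rw [← h1, Finset.mul_sum]
    refine Finset.sum_congr rfl fun t _ => ?_
    simp only [w, eval_mul, eval_C, eval_pow, eval_X, eval_sub, hHx]
    have h3 : x ^ (D * (p - 1)) = x ^ (D * t.2.2.1) * x ^ (D * (p - 1 - t.2.2.1)) := by
      rw [← pow_add, ← mul_add, hsum]
    rw [show s * x ^ D - x ^ D * h = x ^ D * (s - h) by ring, mul_pow, h3, ← pow_mul]
    ring
  have hE2 := (mul_eq_zero.1 hE).resolve_left (pow_ne_zero _ hx0)
  have hGx : G.eval x = x ^ (D * (p - 1)) *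
      ∑ t : ι, c t * x ^ (t.1.1 + R * t.2.1.1) * h ^ t.2.2.1 := by
    rw [hGdef, eval_finsetSum, Finset.mul_sum]
    refine Finset.sum_congr rfl fun t _ => ?_
    simp only [v, eval_mul, eval_C, eval_pow, eval_X, hHx]
    have h3 : x ^ (D * (p - 1)) = x ^ (D * t.2.2.1) * x ^ (D * (p - 1 - t.2.2.1)) := by
      rw [← pow_add, ← mul_add, hsum]
    rw [mul_pow, h3, ← pow_mul]
    ring
  rw [hGx]
  have : (∑ t : ι, c t * x ^ (t.1.1 + R * t.2.1.1) * h ^ t.2.2.1) ^ R = 0 := by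
    rw [hadd, ← hE2]
    refine Finset.sum_congr rfl fun t _ => ?_
    rw [mul_pow, mul_pow, hRR, ← pow_mul]
    rw [show (h ^ t.2.2.1) ^ R = (h ^ R) ^ t.2.2.1 by rw [← pow_mul, ← pow_mul, mul_comm], hhR]
    congr 2
    rw [add_mul, pow_add, pow_add]
    congr 1
    rw [show R * t.2.1.1 * R = t.2.1.1 * R * R by ring, pow_mul, pow_mul, hRR]
  rw [pow_eq_zero_iff (by omega)] at this
  rw [this, mul_zero]

end

theorem sum_abs_le_of_upper {ι : Type*} [Fintype ι] (u : ι → ℝ) (B : ℝ) (hB : 0 ≤ B) (h : ∀ i, u i ≤ B)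
    (c : ℝ) (hs : -c ≤ ∑ i, u i) : ∑ i, |u i| ≤ 2 * (Fintype.card ι) * B + c := by
  have h1 : ∀ i, |u i| ≤ 2 * B - u i := by
    intro i
    rw [abs_le]; constructor <;> linarith [h i]
  calc ∑ i, |u i| ≤ ∑ i, (2 * B - u i) := Finset.sum_le_sum fun i _ => h1 i
    _ = 2 * (Fintype.card ι) * B - ∑ i, u i := by
      rw [Finset.sum_sub_distrib]; simp; ring
    _ ≤ _ := by linarith

theorem weil_even (p : ℕ) [Fact p.Prime] {K : Type*} [Field K] [Fintype K] [Algebra (ZMod p) K]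
    (n d : ℕ) (hcard : Fintype.card K = p ^ (2 * (n + 1))) (hd : 1 ≤ d) (hpd : ¬ p ∣ d)
    (hbig : 2 * d + 2 < p ^ (n + 1)) (a b : K) (ha : a ≠ 0) (ψ : AddChar (ZMod p) ℂ) (hψ : ψ ≠ 1) :
    ‖∑ x : Kˣ, ψ (Algebra.trace (ZMod p) K (a * (x : K) ^ d + b * ((x : K)⁻¹) ^ d))‖ ≤
      (2 * p * (4 * d + 3) + 1) * (p : ℝ) ^ (n + 1) := by
  have hp : p.Prime := Fact.out
  have : CharP K p := charP_of_injective_algebraMap (algebraMap (ZMod p) K).injective p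
  have hfr : Module.finrank (ZMod p) K = 2 * (n + 1) := by
    have h := Module.card_eq_pow_finrank (K := ZMod p) (V := K)
    rw [hcard, ZMod.card] at h
    exact (Nat.pow_right_injective hp.two_le h).symm
  let T : Kˣ → ZMod p := fun x => Algebra.trace (ZMod p) K (a * (x : K) ^ d + b * ((x : K)⁻¹) ^ d)
  let M : ZMod p → ℕ := fun s => (Finset.univ.filter fun x : Kˣ => T x = s).card
  have hM : ∀ s, M s ≤ p ^ (n + 1) * p ^ n + (4 * d + 3) * p ^ (n + 1) := by
    intro s
    refine le_trans ?_ (stepanov p n d hcard hd hpd hbig a b (algebraMap (ZMod p) K s) ha)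
    refine Finset.card_le_card_of_injOn (fun x : Kˣ => (x : K)) ?_ (fun x _ y _ h => Units.ext h)
    intro x hx
    have hx := (Finset.mem_filter.1 (Finset.mem_coe.1 hx)).2
    refine Finset.mem_coe.2 (Finset.mem_filter.2 ⟨Finset.mem_univ _, x.ne_zero, ?_⟩)
    rw [← hx, FiniteField.algebraMap_trace_eq_sum_pow, hfr]
    simp [Nat.card_eq_fintype_card, ZMod.card]
  have hsum : ∑ x : Kˣ, ψ (T x) = ∑ s, (M s : ℂ) * ψ s := by
    rw [← Finset.sum_fiberwise (s := Finset.univ) (g := T)]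
    refine Finset.sum_congr rfl fun s _ => ?_
    rw [Finset.sum_congr rfl (g := fun _ => ψ s) (fun x hx => by rw [(Finset.mem_filter.1 hx).2])]
    simp [M]
  have hMsum : ∑ s, (M s : ℝ) = (p : ℝ) ^ (2 * (n + 1)) - 1 := by
    have h1 : ∑ s, M s = Fintype.card Kˣ := by
      rw [← Finset.card_univ, Finset.card_eq_sum_card_fiberwise (f := T) (t := Finset.univ) (by simp)]
    rw [Fintype.card_units, hcard] at h1
    rw [← Nat.cast_sum, h1, Nat.cast_sub (Nat.one_le_pow _ _ hp.pos)]
    simp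
  have hψs : ∑ s, ψ s = 0 := AddChar.sum_eq_zero_of_ne_one hψ
  have hsum2 : ∑ x : Kˣ, ψ (T x) = ∑ s, (((M s : ℝ) - (p : ℝ) ^ (n + 1) * (p : ℝ) ^ n : ℝ) : ℂ) * ψ s := by
    rw [hsum]
    push_cast
    simp only [sub_mul]
    rw [Finset.sum_sub_distrib, ← Finset.mul_sum, hψs]; simp
  have hfin : ∑ s, |(M s : ℝ) - (p : ℝ) ^ (n + 1) * (p : ℝ) ^ n| ≤
      2 * (Fintype.card (ZMod p)) * ((4 * d + 3) * (p : ℝ) ^ (n + 1)) + 1 := by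
    apply sum_abs_le_of_upper
    · positivity
    · intro s
      have := hM s
      have h2 : (M s : ℝ) ≤ (p : ℝ) ^ (n + 1) * (p : ℝ) ^ n + (4 * d + 3) * (p : ℝ) ^ (n + 1) := by
        exact_mod_cast this
      linarith
    · rw [Finset.sum_sub_distrib, hMsum]
      simp [ZMod.card]
      ring_nf; rfl
  change ‖∑ x : Kˣ, ψ (T x)‖ ≤ _
  rw [hsum2]
  refine (norm_sum_le _ _).trans ?_
  have h3 : ∀ s, ‖(((M s : ℝ) - (p : ℝ) ^ (n + 1) * (p : ℝ) ^ n : ℝ) : ℂ) * ψ s‖ =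
      |(M s : ℝ) - (p : ℝ) ^ (n + 1) * (p : ℝ) ^ n| := by
    intro s
    rw [norm_mul, AddChar.norm_apply, mul_one, Complex.norm_real, Real.norm_eq_abs]
  simp only [h3]
  refine hfin.trans ?_
  rw [ZMod.card]
  have : (1 : ℝ) ≤ (p : ℝ) ^ (n + 1) := one_le_pow₀ (by exact_mod_cast hp.one_lt.le)
  nlinarith

theorem weil_even_twisted (p : ℕ) [Fact p.Prime] {K : Type*} [Field K] [Fintype K]
    [Algebra (ZMod p) K] (n : ℕ) (hcard : Fintype.card K = p ^ (2 * (n + 1))) (hn : 2 ≤ n)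
    (a b : K) (ha : a ≠ 0) (ψ : AddChar (ZMod p) ℂ) (hψ : ψ ≠ 1) (χ : MulChar (ZMod p) ℂ) :
    ‖∑ x : Kˣ, χ (Algebra.norm (ZMod p) (x : K)) *
      ψ (Algebra.trace (ZMod p) K (a * (x : K) + b * ((x : K)⁻¹)))‖ ≤
      (2 * p * (4 * (p - 1 : ℕ) + 3) + 1) * (p : ℝ) ^ (n + 1) := by
  have hp : p.Prime := Fact.out
  have hp2 := hp.two_le
  let F : Kˣ → ℂ := fun x => χ (Algebra.norm (ZMod p) (x : K)) *
      ψ (Algebra.trace (ZMod p) K (a * (x : K) + b * ((x : K)⁻¹)))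
  set B : ℝ := (2 * p * (4 * (p - 1 : ℕ) + 3) + 1) * (p : ℝ) ^ (n + 1)
  have hbig : 2 * (p - 1) + 2 < p ^ (n + 1) := by
    have h1 : p ^ 3 ≤ p ^ (n + 1) := Nat.pow_le_pow_right hp.pos (by omega)
    have h2 : p ^ 3 = p * (p * p) := by ring
    have h3 : p * 4 ≤ p * (p * p) := Nat.mul_le_mul_left _ (by nlinarith)
    omega
  have hnorm : ∀ x : Kˣ, (Algebra.norm (ZMod p) (x : K)) ^ (p - 1) = 1 := by
    intro x
    apply ZMod.pow_card_sub_one_eq_one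
    rw [Ne, Algebra.norm_eq_zero_iff]
    exact x.ne_zero
  have key : (Fintype.card Kˣ : ℂ) * ∑ x, F x = ∑ g : Kˣ, χ (Algebra.norm (ZMod p) (g : K)) *
      ∑ x : Kˣ, ψ (Algebra.trace (ZMod p) K ((a * g) * (x : K) ^ (p - 1) +
        (b * (g : K)⁻¹) * ((x : K)⁻¹) ^ (p - 1))) := by
    have h1 : ∀ x : Kˣ, ∑ g : Kˣ, F (g * x ^ (p - 1)) = ∑ g, F g := fun x =>
      Equiv.sum_comp (Equiv.mulRight (x ^ (p - 1))) F
    have h2 : (Fintype.card Kˣ : ℂ) * ∑ x, F x = ∑ x : Kˣ, ∑ g : Kˣ, F (g * x ^ (p - 1)) := by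
      simp only [h1]; simp
    rw [h2, Finset.sum_comm]
    refine Finset.sum_congr rfl fun g _ => ?_
    rw [Finset.mul_sum]
    refine Finset.sum_congr rfl fun x _ => ?_
    simp only [F, Units.val_mul, Units.val_pow_eq_pow_val, map_mul, map_pow]
    rw [← map_pow χ, hnorm, map_one, mul_one, mul_inv, inv_pow]
    simp only [mul_assoc]
  have hb : ‖(Fintype.card Kˣ : ℂ) * ∑ x, F x‖ ≤ (Fintype.card Kˣ) * B := by
    rw [key]
    refine (norm_sum_le _ _).trans ?_
    refine (Finset.sum_le_card_nsmul _ _ B ?_).trans (by simp)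
    intro g _
    rw [norm_mul]
    have h1 : ‖χ (Algebra.norm (ZMod p) (g : K))‖ ≤ 1 := DirichletCharacter.norm_le_one χ _
    have h2 := weil_even p n (p - 1) hcard (by omega)
      (fun h => by have := Nat.le_of_dvd (by omega) h; omega) hbig (a * g) (b * (g : K)⁻¹)
      (mul_ne_zero ha g.ne_zero) ψ hψ
    calc _ ≤ 1 * B := mul_le_mul h1 h2 (norm_nonneg _) zero_le_one
      _ = B := one_mul B
  rw [norm_mul, Complex.norm_natCast] at hb
  exact le_of_mul_le_mul_left hb (by exact_mod_cast Fintype.card_pos)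

section

open Polynomial

noncomputable def kLam {F : Type*} [Field F] (χ : MulChar F ℂ) (ψ : AddChar F ℂ) (a b : F)
    (g : F[X]) : ℂ :=
  χ ((-1) ^ g.natDegree * g.coeff 0) * ψ (-(a * g.nextCoeff) - b * (g.coeff 1 / g.coeff 0))

theorem kLam_one {F : Type*} [Field F] (χ : MulChar F ℂ) (ψ : AddChar F ℂ) (a b : F) :
    kLam χ ψ a b 1 = 1 := by
  simp [kLam, nextCoeff, coeff_one]

theorem kLam_mul {F : Type*} [Field F] (χ : MulChar F ℂ) (ψ : AddChar F ℂ) (a b : F)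
    {g h : F[X]} (hg : g.Monic) (hh : h.Monic) :
    kLam χ ψ a b (g * h) = kLam χ ψ a b g * kLam χ ψ a b h := by
  by_cases h0 : g.coeff 0 = 0 ∨ h.coeff 0 = 0
  · have : (g * h).coeff 0 = 0 := by rw [mul_coeff_zero]; exact mul_eq_zero.2 h0
    rcases h0 with h0 | h0 <;> simp [kLam, h0, mul_coeff_zero, MulChar.map_zero]
  · push Not at h0
    obtain ⟨hg0, hh0⟩ := h0
    have e1 : -(a * (g * h).nextCoeff) - b * ((g * h).coeff 1 / (g * h).coeff 0) =
        (-(a * g.nextCoeff) - b * (g.coeff 1 / g.coeff 0)) +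
        (-(a * h.nextCoeff) - b * (h.coeff 1 / h.coeff 0)) := by
      rw [hg.nextCoeff_mul hh, mul_coeff_zero, mul_coeff_one]
      field_simp
      ring
    have e2 : (-1) ^ (g * h).natDegree * (g * h).coeff 0 =
        ((-1) ^ g.natDegree * g.coeff 0) * ((-1) ^ h.natDegree * h.coeff 0) := by
      rw [hg.natDegree_mul hh, mul_coeff_zero, pow_add]; ring
    unfold kLam
    rw [e1, e2, map_mul, AddChar.map_add_eq_mul]
    ring

theorem kLam_pow {F : Type*} [Field F] (χ : MulChar F ℂ) (ψ : AddChar F ℂ) (a b : F)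
    {g : F[X]} (hg : g.Monic) (j : ℕ) : kLam χ ψ a b (g ^ j) = kLam χ ψ a b g ^ j := by
  induction j with
  | zero => simp [kLam_one]
  | succ j ih => rw [pow_succ, kLam_mul χ ψ a b (hg.pow j) hg, ih, pow_succ]

theorem finite_monic (F : Type*) [Field F] [Finite F] (N : ℕ) :
    {g : F[X] | g.Monic ∧ g.natDegree = N}.Finite := by
  have : Function.Injective (fun (g : {g : F[X] | g.Monic ∧ g.natDegree = N}) (i : Fin (N + 1)) =>
      g.1.coeff i) := by
    rintro ⟨g, hg⟩ ⟨h, hh⟩ hgh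
    ext n
    simp only
    by_cases hn : n < N + 1
    · exact congrFun hgh ⟨n, hn⟩
    · rw [coeff_eq_zero_of_natDegree_lt (by rw [hg.2]; omega),
        coeff_eq_zero_of_natDegree_lt (by rw [hh.2]; omega)]
  have h2 := Finite.of_injective _ this
  exact Set.toFinite _

noncomputable def MS (F : Type*) [Field F] [Finite F] (N : ℕ) : Finset F[X] :=
  (finite_monic F N).toFinset

theorem mem_MS {F : Type*} [Field F] [Finite F] {N : ℕ} {g : F[X]} :
    g ∈ MS F N ↔ g.Monic ∧ g.natDegree = N := by simp [MS]

noncomputable def kA {F : Type*} [Field F] [Finite F] (χ : MulChar F ℂ) (ψ : AddChar F ℂ) (a b : F)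
    (N : ℕ) : ℂ := ∑ g ∈ MS F N, kLam χ ψ a b g

theorem kA_zero {F : Type*} [Field F] [Finite F] (χ : MulChar F ℂ) (ψ : AddChar F ℂ) (a b : F) :
    kA χ ψ a b 0 = 1 := by
  have : MS F 0 = {1} := by
    ext g
    rw [mem_MS, Finset.mem_singleton]
    constructor
    · rintro ⟨h1, h2⟩; exact h1.natDegree_eq_zero.1 h2
    · rintro rfl; simp [monic_one]
  simp [kA, this, kLam_one]

theorem kA_eq_zero {F : Type*} [Field F] [Finite F] (χ : MulChar F ℂ) (ψ : AddChar F ℂ) (a b : F)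
    (ha : a ≠ 0) (hψ : ψ ≠ 1) (N : ℕ) (hN : 3 ≤ N) : kA χ ψ a b N = 0 := by
  obtain ⟨t, ht⟩ := AddChar.ne_one_iff.1 hψ
  have key : ∀ t, ∀ g ∈ MS F N, g + C t * X ^ (N - 1) ∈ MS F N := by
    intro t g hg
    rw [mem_MS] at hg ⊢
    have hd : (C t * X ^ (N - 1)).degree < g.degree := by
      rw [degree_eq_natDegree hg.1.ne_zero, hg.2]
      refine (degree_C_mul_X_pow_le _ _).trans_lt ?_
      exact_mod_cast (by omega : N - 1 < N)
    exact ⟨hg.1.add_of_left hd, by rw [natDegree_add_eq_left_of_degree_lt hd, hg.2]⟩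
  have h1 : kA χ ψ a b N = ψ t * kA χ ψ a b N := by
    set u := -(t / a) with hu
    conv_lhs => unfold kA
    rw [kA, Finset.mul_sum]
    symm
    refine Finset.sum_bij' (fun g _ => g + C u * X ^ (N - 1)) (fun g _ => g + C (-u) * X ^ (N - 1))
      (fun g hg => key _ g hg) (fun g hg => key _ g hg) ?_ ?_ ?_
    · intro g _; simp
    · intro g _; simp
    · intro g hg
      have hg' := key u g hg
      rw [mem_MS] at hg hg'
      have e0 : (g + C u * X ^ (N - 1)).coeff 0 = g.coeff 0 := by
        rw [coeff_add, coeff_C_mul_X_pow, if_neg (by omega), add_zero]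
      have e1 : (g + C u * X ^ (N - 1)).coeff 1 = g.coeff 1 := by
        rw [coeff_add, coeff_C_mul_X_pow, if_neg (by omega), add_zero]
      have e2 : (g + C u * X ^ (N - 1)).nextCoeff = g.nextCoeff + u := by
        rw [nextCoeff_of_natDegree_pos (by omega), nextCoeff_of_natDegree_pos (by omega), hg.2, hg'.2,
          coeff_add, coeff_C_mul_X_pow, if_pos rfl]
      unfold kLam
      rw [e0, e1, e2, hg.2, hg'.2]
      rw [mul_left_comm, ← AddChar.map_add_eq_mul]
      congr 2
      rw [hu]; field_simp; ring
  have h2 : (1 - ψ t) * kA χ ψ a b N = 0 := by rw [sub_mul, one_mul, ← h1, sub_self]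
  rcases mul_eq_zero.1 h2 with h | h
  · exact absurd (sub_eq_zero.1 h).symm ht
  · exact h

/-- monic irreducibles of degree `e` -/
noncomputable def IrrS (F : Type*) [Field F] [Finite F] (e : ℕ) : Finset F[X] :=
  (MS F e).filter Irreducible

theorem degree_count {F : Type*} [Field F] [Finite F] (N : ℕ) (g : F[X]) (hg : g ∈ MS F N) :
    N = ∑ e ∈ Finset.Icc 1 N, ∑ π ∈ IrrS F e, ∑ j ∈ Finset.Icc 1 N, if π ^ j ∣ g then e else 0 := by
  obtain ⟨hgm, hgd⟩ := mem_MS.1 hg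
  have hg0 := hgm.ne_zero
  have hprod : (UniqueFactorizationMonoid.normalizedFactors g).prod = g := by
    rw [UniqueFactorizationMonoid.prod_normalizedFactors_eq hg0, hgm.normalize_eq_self]
  set s := UniqueFactorizationMonoid.normalizedFactors g with hs
  have hmon : ∀ π ∈ s, π.Monic := fun π hπ => by
    have h1 := UniqueFactorizationMonoid.normalize_normalized_factor π hπ
    have h2 := (UniqueFactorizationMonoid.irreducible_of_normalized_factor π hπ).ne_zero
    rw [← h1]; exact Polynomial.monic_normalize h2
  have hdeg : N = (s.map natDegree).sum := by
    rw [← hgd, ← hprod, natDegree_multiset_prod_of_monic _ hmon]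
  rw [Finset.sum_multiset_map_count] at hdeg
  have hle : ∀ π : F[X], Irreducible π → 1 ≤ π.natDegree := fun π h => h.natDegree_pos
  have hcnt : ∀ π : F[X], π.Monic → Irreducible π → ∀ j, π ^ j ∣ g ↔ j ≤ s.count π := by
    intro π h1 h2 j
    rw [pow_dvd_iff_le_emultiplicity,
      UniqueFactorizationMonoid.emultiplicity_eq_count_normalizedFactors h2 hg0, h1.normalize_eq_self]
    exact_mod_cast Iff.rfl
  have hcN : ∀ π : F[X], π.Monic → Irreducible π → s.count π ≤ N := by
    intro π h1 h2
    have h3 := (hcnt π h1 h2 _).2 le_rfl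
    have h4 := natDegree_le_of_dvd h3 hg0
    rw [natDegree_pow, hgd] at h4
    exact le_trans (Nat.le_mul_of_pos_right _ (hle π h2)) h4
  have hin : ∀ π : F[X], π.Monic → Irreducible π →
      (∑ j ∈ Finset.Icc 1 N, if π ^ j ∣ g then π.natDegree else 0) = s.count π * π.natDegree := by
    intro π h1 h2
    rw [← Finset.sum_filter, Finset.sum_const, smul_eq_mul]
    congr 1
    rw [show (Finset.Icc 1 N).filter (fun j => π ^ j ∣ g) = Finset.Icc 1 (s.count π) from ?_]
    · simp
    · ext j
      have := hcN π h1 h2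
      simp only [Finset.mem_filter, Finset.mem_Icc, hcnt π h1 h2]
      omega
  conv_lhs => rw [hdeg]
  have hmem : ∀ π ∈ s.toFinset, π.natDegree ∈ Finset.Icc 1 N := by
    intro π hπ
    rw [Multiset.mem_toFinset] at hπ
    have h2 := UniqueFactorizationMonoid.irreducible_of_normalized_factor π hπ
    rw [Finset.mem_Icc]
    refine ⟨hle π h2, ?_⟩
    rw [← hgd]
    exact natDegree_le_of_dvd (UniqueFactorizationMonoid.dvd_of_mem_normalizedFactors hπ) hg0
  rw [← Finset.sum_fiberwise_of_maps_to hmem]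
  refine Finset.sum_congr rfl fun e _ => ?_
  have hsub : s.toFinset.filter (fun π => π.natDegree = e) ⊆ IrrS F e := by
    intro π hπ
    obtain ⟨h1, h2⟩ := Finset.mem_filter.1 hπ
    rw [Multiset.mem_toFinset] at h1
    exact Finset.mem_filter.2 ⟨mem_MS.2 ⟨hmon π h1, h2⟩,
      UniqueFactorizationMonoid.irreducible_of_normalized_factor π h1⟩
  rw [Finset.sum_subset hsub]
  · refine Finset.sum_congr rfl fun π hπ => ?_
    obtain ⟨h1, h2⟩ := Finset.mem_filter.1 hπ
    obtain ⟨h3, h4⟩ := mem_MS.1 h1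
    rw [← h4, hin π h3 h2, smul_eq_mul]
  · intro π hπ hn
    obtain ⟨h1, h2⟩ := Finset.mem_filter.1 hπ
    obtain ⟨h3, h4⟩ := mem_MS.1 h1
    have : π ∉ s := fun h => hn (Finset.mem_filter.2 ⟨Multiset.mem_toFinset.2 h, h4⟩)
    rw [Multiset.count_eq_zero.2 this, zero_smul]

noncomputable def kW {F : Type*} [Field F] [Finite F] (χ : MulChar F ℂ) (ψ : AddChar F ℂ) (a b : F)
    (N r : ℕ) : ℂ := ∑ e ∈ Finset.Icc 1 N, ∑ π ∈ IrrS F e, ∑ j ∈ Finset.Icc 1 N,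
      if e * j = r then (e : ℂ) * kLam χ ψ a b π ^ j else 0

theorem kA_newton {F : Type*} [Field F] [Finite F] (χ : MulChar F ℂ) (ψ : AddChar F ℂ) (a b : F)
    (N : ℕ) : (N : ℂ) * kA χ ψ a b N =
      ∑ r ∈ Finset.Icc 1 N, kW χ ψ a b N r * kA χ ψ a b (N - r) := by
  have h1 : (N : ℂ) * kA χ ψ a b N = ∑ g ∈ MS F N, ∑ e ∈ Finset.Icc 1 N, ∑ π ∈ IrrS F e,
      ∑ j ∈ Finset.Icc 1 N, if π ^ j ∣ g then (e : ℂ) * kLam χ ψ a b g else 0 := by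
    rw [kA, Finset.mul_sum]
    refine Finset.sum_congr rfl fun g hg => ?_
    conv_lhs => rw [degree_count N g hg]
    push_cast
    simp only [Finset.sum_mul, ite_mul, zero_mul]
  rw [h1, Finset.sum_comm]
  have h2 : ∑ r ∈ Finset.Icc 1 N, kW χ ψ a b N r * kA χ ψ a b (N - r) =
      ∑ e ∈ Finset.Icc 1 N, ∑ π ∈ IrrS F e, ∑ j ∈ Finset.Icc 1 N, ∑ r ∈ Finset.Icc 1 N,
        if e * j = r then (e : ℂ) * kLam χ ψ a b π ^ j * kA χ ψ a b (N - r) else 0 := by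
    simp only [kW, Finset.sum_mul, ite_mul, zero_mul]
    rw [Finset.sum_comm]
    refine Finset.sum_congr rfl fun e _ => ?_
    rw [Finset.sum_comm]
    refine Finset.sum_congr rfl fun π _ => ?_
    rw [Finset.sum_comm]
  rw [h2]
  refine Finset.sum_congr rfl fun e he => ?_
  rw [Finset.sum_comm]
  refine Finset.sum_congr rfl fun π hπ => ?_
  rw [Finset.sum_comm]
  refine Finset.sum_congr rfl fun j hj => ?_
  obtain ⟨hπ1, hπ2⟩ := Finset.mem_filter.1 hπ
  obtain ⟨hπm, hπd⟩ := mem_MS.1 hπ1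
  rw [Finset.mem_Icc] at he hj
  have hdeg : (π ^ j).natDegree = e * j := by rw [natDegree_pow, hπd, mul_comm]
  have hej : 1 ≤ e * j := Nat.mul_pos he.1 hj.1
  rw [Finset.sum_ite_eq, ← Finset.sum_filter]
  split_ifs with hr
  · rw [Finset.mem_Icc] at hr
    rw [kA, Finset.mul_sum]
    symm
    refine Finset.sum_bij (fun h _ => π ^ j * h) ?_ ?_ ?_ ?_
    · intro h hh
      obtain ⟨hm, hd⟩ := mem_MS.1 hh
      refine Finset.mem_filter.2 ⟨mem_MS.2 ⟨(hπm.pow j).mul hm, ?_⟩, dvd_mul_right _ _⟩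
      rw [(hπm.pow j).natDegree_mul hm, hdeg, hd]; omega
    · intro h _ h' _ hh
      exact mul_left_cancel₀ (hπm.pow j).ne_zero hh
    · intro g hg
      obtain ⟨hg1, h, rfl⟩ := Finset.mem_filter.1 hg
      obtain ⟨hm, hd⟩ := mem_MS.1 hg1
      have hhm := (hπm.pow j).of_mul_monic_left hm
      refine ⟨h, mem_MS.2 ⟨hhm, ?_⟩, rfl⟩
      rw [(hπm.pow j).natDegree_mul hhm, hdeg] at hd; omega
    · intro h hh
      obtain ⟨hm, hd⟩ := mem_MS.1 hh
      rw [kLam_mul χ ψ a b (hπm.pow j) hm, kLam_pow χ ψ a b hπm]; ring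
  · refine Finset.sum_eq_zero fun g hg => ?_
    obtain ⟨hg1, hg2⟩ := Finset.mem_filter.1 hg
    obtain ⟨hm, hd⟩ := mem_MS.1 hg1
    have := natDegree_le_of_dvd hg2 hm.ne_zero
    rw [hdeg, hd] at this
    exact absurd (Finset.mem_Icc.2 ⟨hej, this⟩) hr

end

section

open Polynomial

open IntermediateField in
theorem minpoly_inv_nextCoeff {F K : Type*} [Field F] [Field K] [Algebra F K] [FiniteDimensional F K]
    (x : K) (hx : x ≠ 0) : (minpoly F x⁻¹).nextCoeff = (minpoly F x).coeff 1 / (minpoly F x).coeff 0 ∧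
      F⟮x⁻¹⟯ = F⟮x⟯ := by
  have hadj : F⟮x⁻¹⟯ = F⟮x⟯ := by
    apply le_antisymm
    · rw [adjoin_simple_le_iff]
      exact inv_mem (mem_adjoin_simple_self F x)
    · rw [adjoin_simple_le_iff]
      have := inv_mem (mem_adjoin_simple_self F x⁻¹)
      rwa [inv_inv] at this
  refine ⟨?_, hadj⟩
  have hIntegral : IsIntegral F x := .of_finite F x
  have hIntegral' : IsIntegral F x⁻¹ := .of_finite F x⁻¹
  have hdeg : (minpoly F x⁻¹).natDegree = (minpoly F x).natDegree := by
    rw [← adjoin.finrank hIntegral, ← adjoin.finrank hIntegral', hadj]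
  set f := minpoly F x with hf
  have hf0 : f.coeff 0 ≠ 0 := minpoly.coeff_zero_ne_zero hIntegral hx
  have hpos : 0 < f.natDegree := minpoly.natDegree_pos hIntegral
  have hfm : f.Monic := minpoly.monic hIntegral
  have hrd : f.reverse.natDegree = f.natDegree := by
    rw [reverse_natDegree, natTrailingDegree_eq_zero.2 (Or.inr hf0), Nat.sub_zero]
  have hlead : f.reverse.leadingCoeff = f.coeff 0 := by
    rw [reverse_leadingCoeff, trailingCoeff, natTrailingDegree_eq_zero.2 (Or.inr hf0)]
  have hmon : (C (f.coeff 0)⁻¹ * f.reverse).Monic := by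
    rw [Monic, leadingCoeff_mul, leadingCoeff_C, hlead, inv_mul_cancel₀ hf0]
  have hnd : (C (f.coeff 0)⁻¹ * f.reverse).natDegree = f.natDegree := by
    rw [natDegree_C_mul (inv_ne_zero hf0), hrd]
  have heq : C (f.coeff 0)⁻¹ * f.reverse = minpoly F x⁻¹ := by
    apply minpoly.unique_of_degree_le_degree_minpoly F _ hmon
    · rw [map_mul]
      have : aeval x⁻¹ f.reverse = 0 := by
        let _ := invertibleOfNonzero hx
        have h := (eval₂_reverse_eq_zero_iff (algebraMap F K) x f).2 (minpoly.aeval F x)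
        rwa [invOf_eq_inv] at h
      rw [this, mul_zero]
    · rw [degree_eq_natDegree hmon.ne_zero, degree_eq_natDegree (minpoly.ne_zero hIntegral'), hnd, hdeg]
  rw [← heq, nextCoeff_of_natDegree_pos (by omega), hnd, coeff_C_mul, coeff_reverse,
    revAt_le (by omega), show f.natDegree - (f.natDegree - 1) = 1 by omega]
  field_simp

open IntermediateField in
theorem kLam_minpoly {F K : Type*} [Field F] [Field K] [Algebra F K] [FiniteDimensional F K]
    (χ : MulChar F ℂ) (ψ : AddChar F ℂ) (a b : F) (x : K) :
    (minpoly F x).natDegree * (Module.finrank F⟮x⟯ K) = Module.finrank F K ∧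
    kLam χ ψ a b (minpoly F x) ^ (Module.finrank F⟮x⟯ K) =
      χ (Algebra.norm F x) *
        ψ (Algebra.trace F K (algebraMap F K a * x + algebraMap F K b * x⁻¹)) := by
  have hIntegral : IsIntegral F x := .of_finite F x
  have hmul : (minpoly F x).natDegree * (Module.finrank F⟮x⟯ K) = Module.finrank F K := by
    rw [← adjoin.finrank hIntegral]
    exact Module.finrank_mul_finrank F F⟮x⟯ K
  refine ⟨hmul, ?_⟩
  have hpos : 0 < Module.finrank F K := Module.finrank_pos
  have hk : Module.finrank F⟮x⟯ K ≠ 0 := by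
    intro h; rw [h] at hmul; omega
  set k := Module.finrank F⟮x⟯ K with hkdef
  by_cases hx : x = 0
  · subst hx
    have h1 : kLam χ ψ a b (minpoly F (0 : K)) = 0 := by
      simp [kLam, MulChar.map_zero]
    rw [h1, Algebra.norm_zero, MulChar.map_zero, zero_mul, zero_pow hk]
  have hnorm : Algebra.norm F x = ((-1) ^ (minpoly F x).natDegree * (minpoly F x).coeff 0) ^ k := by
    rw [Algebra.norm_eq_norm_adjoin]
    congr 1
    have := Algebra.PowerBasis.norm_gen_eq_coeff_zero_minpoly (adjoin.powerBasis hIntegral)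
    simpa [minpoly_gen F x] using this
  obtain ⟨h1, h2⟩ := minpoly_inv_nextCoeff (F := F) x hx
  have htr : Algebra.trace F K (algebraMap F K a * x + algebraMap F K b * x⁻¹) =
      k • (-(a * (minpoly F x).nextCoeff) - b * ((minpoly F x).coeff 1 / (minpoly F x).coeff 0)) := by
    rw [← Algebra.smul_def, ← Algebra.smul_def, map_add, map_smul, map_smul,
      trace_eq_finrank_mul_minpoly_nextCoeff, trace_eq_finrank_mul_minpoly_nextCoeff, h1, h2]
    simp only [smul_eq_mul, nsmul_eq_mul]
    ring
  rw [htr, AddChar.map_nsmul_eq_pow, hnorm, map_pow, ← mul_pow]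
  rfl

theorem card_minpoly_fiber {F K : Type*} [Field F] [Finite F] [Field K] [Fintype K] [Algebra F K]
    (π : F[X]) (hm : π.Monic) (hi : Irreducible π) (hd : π.natDegree ∣ Module.finrank F K) :
    (Finset.univ.filter fun x : K => minpoly F x = π).card = π.natDegree := by
  have hdvd := hi.natDegree_dvd_iff_dvd_X_pow_card_pow_sub_X.1 hd
  have hcard : Nat.card K = Nat.card F ^ Module.finrank F K := Module.natCard_eq_pow_finrank
  rw [← hcard] at hdvd
  have hsplit : (π.map (algebraMap F K)).Splits := by
    have h1 := Polynomial.map_dvd (algebraMap F K) hdvd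
    rw [Polynomial.map_sub, Polynomial.map_pow, Polynomial.map_X] at h1
    refine Splits.of_dvd (Polynomial.splits_X_pow_nat_card_sub_X) ?_ h1
    exact FiniteField.X_pow_card_sub_X_ne_zero K Finite.one_lt_card
  have hset : (Finset.univ.filter fun x : K => minpoly F x = π) = (π.map (algebraMap F K)).roots.toFinset := by
    ext x
    rw [Finset.mem_filter, Multiset.mem_toFinset, mem_roots (map_monic_ne_zero hm), IsRoot.def, eval_map_algebraMap]
    constructor
    · rintro ⟨-, h⟩; rw [← h]; exact minpoly.aeval F x
    · intro h; exact ⟨Finset.mem_univ _, (minpoly.eq_of_irreducible_of_monic hi h hm).symm⟩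
  have hsep : π.Separable := PerfectField.separable_of_irreducible hi
  rw [hset, Multiset.toFinset_card_of_nodup (nodup_roots hsep.map), ← hsplit.natDegree_eq_card_roots,
    natDegree_map]

theorem kS_eq_kW {F K : Type*} [Field F] [Finite F] [Field K] [Fintype K] [Algebra F K]
    (χ : MulChar F ℂ) (ψ : AddChar F ℂ) (a b : F) (N r : ℕ) (hr : Module.finrank F K = r) (hN : r ≤ N) :
    ∑ x : Kˣ, χ (Algebra.norm F (x : K)) *
        ψ (Algebra.trace F K (algebraMap F K a * x + algebraMap F K b * (x : K)⁻¹)) =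
      kW χ ψ a b N r := by
  have : FiniteDimensional F K := inferInstance
  have hr0 : 0 < r := hr ▸ Module.finrank_pos
  let f : K → ℂ := fun x => χ (Algebra.norm F (x : K)) *
        ψ (Algebra.trace F K (algebraMap F K a * x + algebraMap F K b * (x : K)⁻¹))
  have h1 : ∑ x : Kˣ, f x = ∑ x : K, f x := by
    rw [← Finset.sum_subset (Finset.subset_univ (Finset.univ.map ⟨fun u : Kˣ => (u : K), fun _ _ h => Units.ext h⟩))]
    · rw [Finset.sum_map]; rfl
    · intro x _ hx
      have : x = 0 := by
        by_contra h
        exact hx (Finset.mem_map.2 ⟨Units.mk0 x h, Finset.mem_univ _, rfl⟩)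
      simp [f, this, MulChar.map_zero]
  change ∑ x : Kˣ, f x = _
  rw [h1]
  have hf : ∀ x, ∀ j, (minpoly F x).natDegree * j = r → f x = kLam χ ψ a b (minpoly F x) ^ j := by
    intro x j hj
    obtain ⟨h2, h3⟩ := kLam_minpoly χ ψ a b x
    rw [hr, ← hj] at h2
    have hpos : 0 < (minpoly F x).natDegree := minpoly.natDegree_pos (.of_finite F x)
    rw [← Nat.eq_of_mul_eq_mul_left hpos h2, h3]
  have hdr : ∀ x : K, ∃ j, (minpoly F x).natDegree * j = r := fun x =>
    ⟨_, (kLam_minpoly χ ψ a b x).1.trans hr⟩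
  have hmem : ∀ x ∈ (Finset.univ : Finset K), (minpoly F x).natDegree ∈ Finset.Icc 1 N := by
    intro x _
    obtain ⟨j, hj⟩ := hdr x
    rw [Finset.mem_Icc]
    refine ⟨minpoly.natDegree_pos (.of_finite F x), le_trans (Nat.le_of_dvd hr0 ⟨j, hj.symm⟩) hN⟩
  rw [kW, ← Finset.sum_fiberwise_of_maps_to hmem]
  refine Finset.sum_congr rfl fun e he => ?_
  rw [Finset.mem_Icc] at he
  have hmem2 : ∀ x ∈ (Finset.univ : Finset K).filter (fun x => (minpoly F x).natDegree = e),
      minpoly F x ∈ IrrS F e := by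
    intro x hx
    have hi : IsIntegral F x := .of_finite F x
    exact Finset.mem_filter.2 ⟨mem_MS.2 ⟨minpoly.monic hi, (Finset.mem_filter.1 hx).2⟩, minpoly.irreducible hi⟩
  rw [← Finset.sum_fiberwise_of_maps_to hmem2]
  refine Finset.sum_congr rfl fun π hπ => ?_
  obtain ⟨hπ1, hπi⟩ := Finset.mem_filter.1 hπ
  obtain ⟨hπm, hπd⟩ := mem_MS.1 hπ1
  have hfil : ((Finset.univ : Finset K).filter (fun x => (minpoly F x).natDegree = e)).filter
      (fun x => minpoly F x = π) = Finset.univ.filter (fun x => minpoly F x = π) := by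
    ext x
    simp only [Finset.mem_filter, Finset.mem_univ, true_and]
    constructor
    · exact fun h => h.2
    · intro h; exact ⟨by rw [h, hπd], h⟩
  rw [hfil]
  by_cases hdv : e ∣ r
  · obtain ⟨j, rfl⟩ := hdv
    have hj : 1 ≤ j := Nat.pos_of_mul_pos_left hr0 |> fun _ => by
      rcases Nat.eq_zero_or_pos j with h | h
      · subst h; simp at hr0
      · exact h
    have hjN : j ≤ N := le_trans (Nat.le_mul_of_pos_left _ he.1) hN
    rw [Finset.sum_eq_single j]
    · rw [if_pos rfl, Finset.sum_congr rfl (g := fun _ => kLam χ ψ a b π ^ j), Finset.sum_const,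
        card_minpoly_fiber π hπm hπi (by rw [hr, hπd]; exact dvd_mul_right _ _), hπd, nsmul_eq_mul]
      intro x hx
      have hx := (Finset.mem_filter.1 hx).2
      rw [hf x j (by rw [hx, hπd]), hx]
    · intro i _ hi
      rw [if_neg]
      intro h; exact hi (Nat.eq_of_mul_eq_mul_left he.1 h)
    · intro h; exact absurd (Finset.mem_Icc.2 ⟨hj, hjN⟩) h
  · rw [Finset.sum_eq_zero, Finset.sum_eq_zero]
    · intro j _
      rw [if_neg]
      rintro rfl; exact hdv (dvd_mul_right _ _)
    · intro x hx
      have hx := (Finset.mem_filter.1 hx).2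
      obtain ⟨j, hj⟩ := hdr x
      rw [hx, hπd] at hj
      exact absurd ⟨j, hj.symm⟩ hdv

end

theorem two_power_sum_rec (A s : ℕ → ℂ) (hA0 : A 0 = 1) (hA : ∀ N, 3 ≤ N → A N = 0)
    (hN : ∀ N : ℕ, (N : ℂ) * A N = ∑ r ∈ Finset.Icc 1 N, s r * A (N - r)) :
    ∃ u v : ℂ, ∀ r, 1 ≤ r → s r = -(u ^ r + v ^ r) := by
  obtain ⟨u, hu⟩ := IsAlgClosed.exists_eq_mul_self (A 1 ^ 2 - 4 * A 2)
  refine ⟨(-A 1 + u) / 2, (-A 1 - u) / 2, ?_⟩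
  have h1 := hN 1
  have h2 := hN 2
  have hrec : ∀ n, 1 ≤ n → s (n + 2) = - A 1 * s (n + 1) - A 2 * s n := by
    intro n hn
    have h := hN (n + 2)
    rw [hA (n + 2) (by omega), mul_zero] at h
    have hsub : ({n, n + 1, n + 2} : Finset ℕ) ⊆ Finset.Icc 1 (n + 2) := by
      intro x hx
      simp only [Finset.mem_insert, Finset.mem_singleton] at hx
      rw [Finset.mem_Icc]; omega
    rw [← Finset.sum_subset hsub] at h
    · rw [Finset.sum_insert (by simp), Finset.sum_insert (by simp), Finset.sum_singleton,
        show n + 2 - n = 2 by omega, show n + 2 - (n + 1) = 1 by omega, Nat.sub_self, hA0] at h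
      linear_combination -h
    · intro x hx hx'
      simp only [Finset.mem_insert, Finset.mem_singleton] at hx'
      rw [Finset.mem_Icc] at hx
      rw [hA _ (by omega), mul_zero]
  have e1 : s 1 = A 1 := by
    simp [hA0] at h1; exact h1.symm
  have e2 : s 2 = 2 * A 2 - A 1 ^ 2 := by
    rw [show Finset.Icc 1 2 = {1, 2} by decide, Finset.sum_insert (by simp), Finset.sum_singleton] at h2
    simp [hA0, e1] at h2
    linear_combination -h2
  intro r
  induction r using Nat.strong_induction_on with
  | _ r ih =>
    intro hr
    by_cases hr1 : r = 1
    · subst hr1; rw [e1]; ring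
    by_cases hr2 : r = 2
    · subst hr2; rw [e2]; linear_combination (-1/2 : ℂ) * hu
    obtain ⟨n, rfl⟩ : ∃ n, r = n + 2 := ⟨r - 2, by omega⟩
    rw [hrec n (by omega), ih (n + 1) (by omega) (by omega), ih n (by omega) (by omega)]
    linear_combination  (((-A 1 + u) / 2) ^ n + ((-A 1 - u) / 2) ^ n) * (-1/4 : ℂ) * hu

theorem norm_le_of_pow_bound (w : ℂ) (B Q : ℝ) (hQ : 0 < Q) (m0 : ℕ)
    (h : ∀ m, m0 ≤ m → ‖w‖ ^ m ≤ B * Q ^ m) : ‖w‖ ≤ Q := by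
  by_contra hlt
  push Not at hlt
  have h1 : 1 < ‖w‖ / Q := (one_lt_div hQ).2 hlt
  obtain ⟨n, hn⟩ := pow_unbounded_of_one_lt B h1
  have h2 := h (n + m0) (by omega)
  have h3 : (‖w‖ / Q) ^ n ≤ (‖w‖ / Q) ^ (n + m0) := pow_le_pow_right₀ h1.le (by omega)
  have h4 : (‖w‖ / Q) ^ (n + m0) ≤ B := by
    rw [div_pow, div_le_iff₀ (by positivity)]; exact h2
  linarith

theorem norm_le_of_power_sum_bound (w z : ℂ) (B Q : ℝ) (hB : 0 ≤ B) (hQ : 0 < Q) (m0 : ℕ)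
    (h : ∀ m, m0 ≤ m → ‖w ^ m + z ^ m‖ ≤ B * Q ^ m) : ‖w‖ ≤ Q := by
  by_cases hwz : w = z
  · subst hwz
    refine norm_le_of_pow_bound w B Q hQ m0 fun m hm => ?_
    have := h m hm
    rw [← two_mul, norm_mul, norm_pow] at this
    have h0 : 0 ≤ ‖w‖ ^ m := by positivity
    simp at this
    linarith
  · have hd : 0 < ‖w - z‖ := norm_pos_iff.2 (sub_ne_zero.2 hwz)
    refine norm_le_of_pow_bound w (B * (Q + ‖z‖) / ‖w - z‖) Q hQ m0 fun m hm => ?_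
    have e : w ^ m * (w - z) = (w ^ (m + 1) + z ^ (m + 1)) - z * (w ^ m + z ^ m) := by ring
    have h1 : ‖w‖ ^ m * ‖w - z‖ ≤ B * Q ^ (m + 1) + ‖z‖ * (B * Q ^ m) := by
      rw [← norm_pow, ← norm_mul, e]
      refine (norm_sub_le _ _).trans (add_le_add (h _ (by omega)) ?_)
      rw [norm_mul]
      exact mul_le_mul_of_nonneg_left (h _ hm) (norm_nonneg _)
    rw [div_mul_eq_mul_div, le_div_iff₀ hd]
    calc _ ≤ _ := h1
      _ = _ := by ring

theorem kloosterman_twisted (p : ℕ) [Fact p.Prime] (a b : ZMod p) (ha : a ≠ 0)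
    (ψ : AddChar (ZMod p) ℂ) (hψ : ψ ≠ 1) (χ : MulChar (ZMod p) ℂ) :
    ‖∑ x : (ZMod p)ˣ, χ (x : ZMod p) * ψ (a * x + b * (x : ZMod p)⁻¹)‖ ≤ 2 * Real.sqrt p := by
  have hp0 : 0 < (p : ℝ) := by exact_mod_cast (Fact.out : p.Prime).pos
  have hrank : ∀ r, 1 ≤ r → Module.finrank (ZMod p) (GaloisField p r) = r := fun r hr =>
    GaloisField.finrank p (by omega)
  letI : ∀ r, Fintype (GaloisField p r) := fun r => Fintype.ofFinite _
  let s : ℕ → ℂ := fun r => kW χ ψ a b r r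
  have hs : ∀ N r, 1 ≤ r → r ≤ N → kW χ ψ a b N r = s r := by
    intro N r hr hN
    rw [← kS_eq_kW (K := GaloisField p r) χ ψ a b N r (hrank r hr) hN]
    exact kS_eq_kW (K := GaloisField p r) χ ψ a b r r (hrank r hr) le_rfl
  obtain ⟨u, v, huv⟩ := two_power_sum_rec (fun N => kA χ ψ a b N) s (kA_zero χ ψ a b)
    (kA_eq_zero χ ψ a b ha hψ) (by
      intro N
      rw [kA_newton]
      refine Finset.sum_congr rfl fun r hr => ?_
      rw [Finset.mem_Icc] at hr
      rw [hs N r hr.1 hr.2])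
  have hbd : ∀ m, 3 ≤ m → ‖(u ^ 2) ^ m + (v ^ 2) ^ m‖ ≤ (2*p*(4*(p-1:ℕ)+3)+1) * (p:ℝ)^m := by
    intro m hm
    obtain ⟨n, rfl⟩ : ∃ n, m = n + 1 := ⟨m - 1, by omega⟩
    have h1 := huv (2 * (n + 1)) (by omega)
    have h2 := kS_eq_kW (K := GaloisField p (2 * (n + 1))) χ ψ a b _ _ (hrank _ (by omega)) le_rfl
    have h3 := weil_even_twisted p (K := GaloisField p (2 * (n + 1))) n
      (by rw [← Nat.card_eq_fintype_card, GaloisField.card p _ (by omega)]) (by omega)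
      (algebraMap _ _ a) (algebraMap _ _ b) (by simpa using ha) ψ hψ χ
    rw [h2] at h3
    change ‖s _‖ ≤ _ at h3
    rw [h1, norm_neg, pow_mul, pow_mul] at h3
    exact h3
  have hB : (0:ℝ) ≤ (2*p*(4*(p-1:ℕ)+3)+1) := by positivity
  have hu := norm_le_of_power_sum_bound _ _ _ _ hB hp0 3 hbd
  have hv := norm_le_of_power_sum_bound _ _ _ _ hB hp0 3
    (fun m hm => by rw [add_comm]; exact hbd m hm)
  rw [norm_pow] at hu hv
  have hu' := Real.le_sqrt_of_sq_le hu
  have hv' := Real.le_sqrt_of_sq_le hv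
  have h1 := kS_eq_kW (K := ZMod p) χ ψ a b 1 1 (Module.finrank_self _) le_rfl
  have h2 : ∑ x : (ZMod p)ˣ, χ (x : ZMod p) * ψ (a * x + b * (x : ZMod p)⁻¹) = s 1 := by
    rw [show s 1 = kW χ ψ a b 1 1 from rfl, ← h1]
    refine Finset.sum_congr (Finset.ext fun _ => by simp) fun x _ => ?_
    rw [Algebra.norm_self, Algebra.trace_self]; rfl
  rw [h2, huv 1 le_rfl, norm_neg, pow_one, pow_one]
  linarith [norm_add_le u v]

theorem sum_pow_le_of_twisted (p : ℕ) [Fact p.Prime] (K : ℕ) (hK : 0 < K) (F : (ZMod p)ˣ → ℂ) (M : ℝ)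
    (hF : ∀ χ : DirichletCharacter ℂ p, ‖∑ m : (ZMod p)ˣ, χ (m : ZMod p) * F m‖ ≤ M) :
    ‖∑ n : (ZMod p)ˣ, F (n ^ K)‖ ≤ K * M := by
  have hM : 0 ≤ M := (norm_nonneg _).trans (hF 1)
  have hφ : (p.totient : ℂ) ≠ 0 := by
    exact_mod_cast (Nat.totient_pos.2 (Fact.out : p.Prime).pos).ne'
  have hcard : (Fintype.card (ZMod p)ˣ : ℂ) = p.totient := by
    rw [ZMod.card_units_eq_totient]
  have h1 : ∀ n : (ZMod p)ˣ, (p.totient : ℂ) * F (n ^ K) =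
      ∑ χ : DirichletCharacter ℂ p, (χ ((n⁻¹ : (ZMod p)ˣ) : ZMod p)) ^ K * ∑ m : (ZMod p)ˣ, χ (m : ZMod p) * F m := by
    intro n
    simp_rw [Finset.mul_sum]
    rw [Finset.sum_comm, Finset.sum_eq_single (n ^ K)]
    · simp_rw [← mul_assoc]
      rw [← Finset.sum_mul]
      have := DirichletCharacter.sum_char_inv_mul_char_eq ℂ (n ^ K : (ZMod p)ˣ).isUnit ((n ^ K : (ZMod p)ˣ) : ZMod p)
      rw [if_pos rfl] at this
      rw [← this]
      congr 1
      refine Finset.sum_congr rfl fun χ _ => ?_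
      rw [← map_pow, ZMod.inv_coe_unit, ← Units.val_pow_eq_pow_val, inv_pow]
    · intro m _ hm
      simp_rw [← mul_assoc]
      rw [← Finset.sum_mul]
      have := DirichletCharacter.sum_char_inv_mul_char_eq ℂ (n ^ K : (ZMod p)ˣ).isUnit (m : ZMod p)
      rw [if_neg (fun h => hm (Units.ext h).symm)] at this
      rw [← zero_mul (F m), ← this]
      congr 1
      refine Finset.sum_congr rfl fun χ _ => ?_
      rw [← map_pow, ZMod.inv_coe_unit, ← Units.val_pow_eq_pow_val, inv_pow]
    · intro h; exact absurd (Finset.mem_univ _) h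
  have h2 : ∀ χ : DirichletCharacter ℂ p, ∑ n : (ZMod p)ˣ, (χ ((n⁻¹ : (ZMod p)ˣ) : ZMod p)) ^ K =
      if χ ^ K = 1 then (p.totient : ℂ) else 0 := by
    intro χ
    rw [← hcard]
    have e : ∑ n : (ZMod p)ˣ, (χ ((n⁻¹ : (ZMod p)ˣ) : ZMod p)) ^ K = ∑ n : (ZMod p)ˣ, (χ ^ K) (n : ZMod p) := by
      rw [← Equiv.sum_comp (Equiv.inv (ZMod p)ˣ)]
      refine Finset.sum_congr rfl fun n _ => ?_
      rw [MulChar.pow_apply' _ hK.ne']; simp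
    rw [e]
    split_ifs with h
    · rw [h]; simp
    · have h0 := sum_hom_units_eq_zero (R := ℂ) (G := (ZMod p)ˣ)
        (((χ ^ K).toMonoidHom).comp (Units.coeHom (ZMod p))) (by
          intro h'
          apply h
          ext n
          have := DFunLike.congr_fun h' n
          simpa using this)
      simpa using h0
  have h3 : ∑ n : (ZMod p)ˣ, F (n ^ K) =
      ∑ χ : DirichletCharacter ℂ p, if χ ^ K = 1 then ∑ m : (ZMod p)ˣ, χ (m : ZMod p) * F m else 0 := by
    apply mul_left_cancel₀ hφ
    rw [Finset.mul_sum]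
    simp_rw [h1]
    rw [Finset.sum_comm, Finset.mul_sum]
    refine Finset.sum_congr rfl fun χ _ => ?_
    rw [← Finset.sum_mul, h2]
    split_ifs <;> simp
  have h4 : (Finset.univ.filter fun χ : DirichletCharacter ℂ p => χ ^ K = 1).card ≤ K := by
    obtain ⟨e⟩ := DirichletCharacter.mulEquiv_units ℂ p
    have : IsCyclic (DirichletCharacter ℂ p) := isCyclic_of_surjective e.symm e.symm.surjective
    convert IsCyclic.card_pow_eq_one_le (α := DirichletCharacter ℂ p) hK
  rw [h3, ← Finset.sum_filter]
  refine (norm_sum_le_of_le _ (fun χ _ => hF χ)).trans ?_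
  rw [Finset.sum_const, nsmul_eq_mul]
  exact mul_le_mul_of_nonneg_right (by exact_mod_cast h4) hM

theorem kloosterman_prime (p : ℕ) [Fact p.Prime] (K : ℕ) (hK : 0 < K) (a b : ZMod p)
    (hab : a ≠ 0 ∨ b ≠ 0) (ψ : AddChar (ZMod p) ℂ) (hψ : ψ ≠ 1) :
    ‖∑ n : (ZMod p)ˣ, ψ (a * ((n ^ K : (ZMod p)ˣ) : ZMod p) + b * (((n ^ K)⁻¹ : (ZMod p)ˣ) : ZMod p))‖ ≤
      2 * K * Real.sqrt p := by
  have hp : ∀ a b : ZMod p, a ≠ 0 → ‖∑ n : (ZMod p)ˣ, ψ (a * ((n ^ K : (ZMod p)ˣ) : ZMod p) +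
      b * (((n ^ K)⁻¹ : (ZMod p)ˣ) : ZMod p))‖ ≤ 2 * K * Real.sqrt p := by
    intro a b ha
    have := sum_pow_le_of_twisted p K hK (fun m => ψ (a * (m : ZMod p) + b * ((m⁻¹ : (ZMod p)ˣ) : ZMod p)))
      (2 * Real.sqrt p) (fun χ => by
        have := kloosterman_twisted p a b ha ψ hψ χ
        simpa only [Units.val_inv_eq_inv_val] using this)
    refine this.trans (le_of_eq (by ring))
  rcases hab with h | h
  · exact hp a b h
  · have := hp b a h
    rw [← Equiv.sum_comp (Equiv.inv (ZMod p)ˣ)] at this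
    convert this using 4 with n
    simp [add_comm]

noncomputable def klS {R : Type*} [CommRing R] [Fintype R] (ψ : AddChar R ℂ) (K : ℕ) (a b : R) : ℂ :=
  ∑ x : Rˣ, ψ (a * ((x ^ K : Rˣ) : R) + b * (((x ^ K)⁻¹ : Rˣ) : R))

theorem klS_swap {R : Type*} [CommRing R] [Fintype R] (ψ : AddChar R ℂ) (K : ℕ) (a b : R) :
    klS ψ K a b = klS ψ K b a := by
  unfold klS
  rw [← Equiv.sum_comp (Equiv.inv Rˣ)]
  refine Finset.sum_congr rfl fun x _ => ?_
  simp only [Equiv.inv_apply, inv_pow, inv_inv]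
  rw [add_comm]

theorem one_add_pow_of_sq_eq_zero {R : Type*} [CommRing R] (y : R) (hy : y ^ 2 = 0) (K : ℕ) :
    (1 + y) ^ K = 1 + K * y := by
  induction K with
  | zero => simp
  | succ K ih => rw [pow_succ, ih]; push_cast; linear_combination (K : R) * hy

theorem one_add_pow_of_cube_eq_zero {R : Type*} [CommRing R] (y : R) (hy : y ^ 3 = 0) (K : ℕ) :
    (1 + y) ^ K = 1 + K * y + (K.choose 2 : ℕ) * y ^ 2 := by
  induction K with
  | zero => simp
  | succ K ih =>
    have : (K + 1).choose 2 = K + K.choose 2 := by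
      rw [Nat.choose_succ_succ' K 1, Nat.choose_one_right]
    rw [pow_succ, ih, this]; push_cast; linear_combination (K.choose 2 : R) * hy

theorem one_sub_pow_of_cube_eq_zero {R : Type*} [CommRing R] (y : R) (hy : y ^ 3 = 0) (K : ℕ) :
    (1 - y + y ^ 2) ^ K = 1 - K * y + ((K + 1).choose 2 : ℕ) * y ^ 2 := by
  induction K with
  | zero => simp
  | succ K ih =>
    have : (K + 1 + 1).choose 2 = K + 1 + (K + 1).choose 2 := by
      rw [Nat.choose_succ_succ' (K + 1) 1, Nat.choose_one_right]
    rw [pow_succ, ih, this]; push_cast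
    linear_combination (-(K : R) - ((K + 1).choose 2 : R) + ((K + 1).choose 2 : R) * y) * hy

theorem klS_le_count {R : Type*} [CommRing R] [Fintype R] (ψ : AddChar R ℂ) (hψ : ψ.IsPrimitive)
    (K : ℕ) (a b π : R) (hπ : π ^ 2 = 0) :
    ‖klS ψ K a b‖ ≤ (Finset.univ.filter fun x : Rˣ =>
      (K : R) * π * (a * ((x ^ K : Rˣ) : R) - b * (((x ^ K)⁻¹ : Rˣ) : R)) = 0).card := by
  have hq : 0 < (Fintype.card R : ℝ) := by exact_mod_cast Fintype.card_pos
  let u : R → Rˣ := fun t => ⟨1 + π * t, 1 - π * t, by linear_combination -t^2 * hπ, by linear_combination -t^2 * hπ⟩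
  have hu : ∀ t, ∀ x : Rˣ, ψ (a * (((x * u t) ^ K : Rˣ) : R) + b * ((((x * u t) ^ K)⁻¹ : Rˣ) : R)) =
      ψ (a * ((x ^ K : Rˣ) : R) + b * (((x ^ K)⁻¹ : Rˣ) : R)) *
      ψ (t * ((K : R) * π * (a * ((x ^ K : Rˣ) : R) - b * (((x ^ K)⁻¹ : Rˣ) : R)))) := by
    intro t x
    rw [← AddChar.map_add_eq_mul]
    congr 1
    have e1 : (((u t) ^ K : Rˣ) : R) = 1 + K * (π * t) := by
      rw [Units.val_pow_eq_pow_val]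
      exact one_add_pow_of_sq_eq_zero _ (by linear_combination t^2 * hπ) K
    have e2 : ((((u t) ^ K)⁻¹ : Rˣ) : R) = 1 - K * (π * t) := by
      rw [← inv_pow, Units.val_pow_eq_pow_val]
      change (1 - π * t) ^ K = _
      rw [sub_eq_add_neg, one_add_pow_of_sq_eq_zero _ (by linear_combination t^2 * hπ) K]
      ring
    rw [mul_pow, mul_inv, Units.val_mul, Units.val_mul, e1, e2]
    ring
  have h1 : ∀ t, klS ψ K a b = ∑ x : Rˣ, ψ (a * ((x ^ K : Rˣ) : R) + b * (((x ^ K)⁻¹ : Rˣ) : R)) *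
      ψ (t * ((K : R) * π * (a * ((x ^ K : Rˣ) : R) - b * (((x ^ K)⁻¹ : Rˣ) : R)))) := by
    intro t
    unfold klS
    rw [← Equiv.sum_comp (Equiv.mulRight (u t))]
    exact Finset.sum_congr rfl fun x _ => hu t x
  have h2 : (Fintype.card R : ℂ) * klS ψ K a b = ∑ x : Rˣ,
      ψ (a * ((x ^ K : Rˣ) : R) + b * (((x ^ K)⁻¹ : Rˣ) : R)) *
      ∑ t, ψ (t * ((K : R) * π * (a * ((x ^ K : Rˣ) : R) - b * (((x ^ K)⁻¹ : Rˣ) : R)))) := by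
    simp_rw [Finset.mul_sum]
    rw [Finset.sum_comm, ← Finset.sum_congr rfl fun t _ => h1 t]
    simp
  have h3 : ‖(Fintype.card R : ℂ) * klS ψ K a b‖ ≤ ∑ x : Rˣ,
      if (K : R) * π * (a * ((x ^ K : Rˣ) : R) - b * (((x ^ K)⁻¹ : Rˣ) : R)) = 0 then (Fintype.card R : ℝ) else 0 := by
    rw [h2]
    refine norm_sum_le_of_le _ fun x _ => ?_
    rw [norm_mul, AddChar.norm_apply, one_mul, AddChar.sum_mulShift _ hψ]
    split_ifs <;> simp
  rw [norm_mul, Complex.norm_natCast, ← Finset.sum_filter, Finset.sum_const, nsmul_eq_mul, mul_comm] at h3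
  exact le_of_mul_le_mul_right h3 hq

theorem quad_sum_bound {R : Type*} [CommRing R] [Fintype R] (ψ : AddChar R ℂ) (hψ : ψ.IsPrimitive)
    (α β : R) : ‖∑ t, ψ (α * t + β * t ^ 2)‖ ^ 2 ≤
      Fintype.card R * (Finset.univ.filter fun h : R => 2 * β * h = 0).card := by
  have e : ((‖∑ t, ψ (α * t + β * t ^ 2)‖ ^ 2 : ℝ) : ℂ) =
      ∑ h, ψ (α * h + β * h ^ 2) * ∑ t, ψ (t * (2 * β * h)) := by
    rw [Complex.ofReal_pow, ← Complex.mul_conj', map_sum, Finset.sum_mul_sum, Finset.sum_comm]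
    have : ∀ t : R, ∑ i, ψ (α * i + β * i ^ 2) * (starRingEnd ℂ) (ψ (α * t + β * t ^ 2)) =
        ∑ h, ψ (α * h + β * h ^ 2) * ψ (t * (2 * β * h)) := by
      intro t
      rw [← Equiv.sum_comp (Equiv.addRight t)]
      refine Finset.sum_congr rfl fun h _ => ?_
      rw [← AddChar.map_neg_eq_conj, ← AddChar.map_add_eq_mul, ← AddChar.map_add_eq_mul]
      congr 1
      simp only [Equiv.coe_addRight]
      ring
    rw [Finset.sum_congr rfl fun t _ => this t, Finset.sum_comm]
    simp_rw [Finset.mul_sum]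
  have h2 : ‖((‖∑ t, ψ (α * t + β * t ^ 2)‖ ^ 2 : ℝ) : ℂ)‖ ≤ ∑ h : R,
      if 2 * β * h = 0 then (Fintype.card R : ℝ) else 0 := by
    rw [e]
    refine norm_sum_le_of_le _ fun x _ => ?_
    rw [norm_mul, AddChar.norm_apply, one_mul, AddChar.sum_mulShift _ hψ]
    split_ifs <;> simp
  rw [Complex.norm_real, Real.norm_of_nonneg (by positivity), ← Finset.sum_filter, Finset.sum_const, nsmul_eq_mul, mul_comm] at h2
  exact h2

theorem klS_le_odd {R : Type*} [CommRing R] [Fintype R] (ψ : AddChar R ℂ) (hψ : ψ.IsPrimitive)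
    (K : ℕ) (a b π ϖ : R) (hπ : π ^ 3 = 0) (hϖ : ϖ * π ^ 2 = 0) (D : ℝ)
    (hD : ∀ x : Rˣ, (K : R) * (ϖ * π) * (a * ((x ^ K : Rˣ) : R) - b * (((x ^ K)⁻¹ : Rˣ) : R)) = 0 →
      ((Finset.univ.filter fun h : R => 2 * (π ^ 2 * ((K.choose 2 : ℕ) * (a * ((x ^ K : Rˣ) : R)) +
        ((K + 1).choose 2 : ℕ) * (b * (((x ^ K)⁻¹ : Rˣ) : R)))) * h = 0).card : ℝ) ≤ Fintype.card R * D ^ 2)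
    (hD0 : 0 ≤ D) :
    ‖klS ψ K a b‖ ≤ (Finset.univ.filter fun x : Rˣ =>
      (K : R) * (ϖ * π) * (a * ((x ^ K : Rˣ) : R) - b * (((x ^ K)⁻¹ : Rˣ) : R)) = 0).card * D := by
  have hq : 0 < (Fintype.card R : ℝ) := by exact_mod_cast Fintype.card_pos
  let u : R → Rˣ := fun t => ⟨1 + π * t, 1 - π * t + (π * t) ^ 2, by linear_combination t^3 * hπ, by linear_combination t^3 * hπ⟩
  let α : Rˣ → R := fun x => (K : R) * π * (a * ((x ^ K : Rˣ) : R) - b * (((x ^ K)⁻¹ : Rˣ) : R))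
  let β : Rˣ → R := fun x => π ^ 2 * ((K.choose 2 : ℕ) * (a * ((x ^ K : Rˣ) : R)) +
        ((K + 1).choose 2 : ℕ) * (b * (((x ^ K)⁻¹ : Rˣ) : R)))
  have hu : ∀ t, ∀ x : Rˣ, ψ (a * (((x * u t) ^ K : Rˣ) : R) + b * ((((x * u t) ^ K)⁻¹ : Rˣ) : R)) =
      ψ (a * ((x ^ K : Rˣ) : R) + b * (((x ^ K)⁻¹ : Rˣ) : R)) * ψ (α x * t + β x * t ^ 2) := by
    intro t x
    rw [← AddChar.map_add_eq_mul]
    congr 1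
    have e1 : (((u t) ^ K : Rˣ) : R) = 1 + K * (π * t) + (K.choose 2 : ℕ) * (π * t) ^ 2 := by
      rw [Units.val_pow_eq_pow_val]
      exact one_add_pow_of_cube_eq_zero _ (by linear_combination t^3 * hπ) K
    have e2 : ((((u t) ^ K)⁻¹ : Rˣ) : R) = 1 - K * (π * t) + ((K + 1).choose 2 : ℕ) * (π * t) ^ 2 := by
      rw [← inv_pow, Units.val_pow_eq_pow_val]
      exact one_sub_pow_of_cube_eq_zero _ (by linear_combination t^3 * hπ) K
    rw [mul_pow, mul_inv, Units.val_mul, Units.val_mul, e1, e2]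
    simp only [α, β]
    ring
  have h1 : ∀ t, klS ψ K a b = ∑ x : Rˣ, ψ (a * ((x ^ K : Rˣ) : R) + b * (((x ^ K)⁻¹ : Rˣ) : R)) *
      ψ (α x * t + β x * t ^ 2) := by
    intro t
    unfold klS
    rw [← Equiv.sum_comp (Equiv.mulRight (u t))]
    exact Finset.sum_congr rfl fun x _ => hu t x
  have h2 : (Fintype.card R : ℂ) * klS ψ K a b = ∑ x : Rˣ,
      ψ (a * ((x ^ K : Rˣ) : R) + b * (((x ^ K)⁻¹ : Rˣ) : R)) *
      ∑ t, ψ (α x * t + β x * t ^ 2) := by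
    simp_rw [Finset.mul_sum]
    rw [Finset.sum_comm, ← Finset.sum_congr rfl fun t _ => h1 t]
    simp
  have h3 : ‖(Fintype.card R : ℂ) * klS ψ K a b‖ ≤ ∑ x : Rˣ,
      if (K : R) * (ϖ * π) * (a * ((x ^ K : Rˣ) : R) - b * (((x ^ K)⁻¹ : Rˣ) : R)) = 0 then
        (Fintype.card R : ℝ) * D else 0 := by
    rw [h2]
    refine norm_sum_le_of_le _ fun x _ => ?_
    rw [norm_mul, AddChar.norm_apply, one_mul]
    split_ifs with h
    · have := quad_sum_bound ψ hψ (α x) (β x)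
      refine abs_le_of_sq_le_sq' ?_ (by positivity) |>.2
      calc _ ≤ _ := this
        _ ≤ _ := mul_le_mul_of_nonneg_left (hD x h) hq.le
        _ = _ := by ring
    · obtain ⟨v, hv⟩ : ∃ v, ψ (ϖ * α x * v) ≠ 1 := by
        have : ϖ * α x ≠ 0 := by
          intro h'; apply h; rw [← h']; simp only [α]; ring
        obtain ⟨v, hv⟩ := AddChar.ne_one_iff.1 (hψ this)
        exact ⟨v, by simpa [AddChar.mulShift_apply] using hv⟩
      have : ∑ t, ψ (α x * t + β x * t ^ 2) = ψ (ϖ * α x * v) * ∑ t, ψ (α x * t + β x * t ^ 2) := by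
        rw [Finset.mul_sum]
        rw [← Equiv.sum_comp (Equiv.addRight (ϖ * v))]
        refine Finset.sum_congr rfl fun t _ => ?_
        rw [← AddChar.map_add_eq_mul]
        congr 1
        simp only [Equiv.coe_addRight, β]
        linear_combination ((K.choose 2 : ℕ) * (a * ((x ^ K : Rˣ) : R)) +
          ((K + 1).choose 2 : ℕ) * (b * (((x ^ K)⁻¹ : Rˣ) : R))) * (2 * t * v + ϖ * v ^ 2) * hϖ
      have h0 : ∑ t, ψ (α x * t + β x * t ^ 2) = 0 := by
        by_contra hne
        exact hv (mul_right_cancel₀ hne (by rw [← this, one_mul]))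
      rw [h0, norm_zero]
  rw [norm_mul, Complex.norm_natCast, ← Finset.sum_filter, Finset.sum_const, nsmul_eq_mul] at h3
  refine le_of_mul_le_mul_left (h3.trans (le_of_eq (by ring))) hq

theorem klS_count {R : Type*} [CommRing R] [Fintype R] [IsAddCyclic R] [IsCyclic Rˣ]
    (K c : ℕ) (hK : 0 < K) (hc : 0 < c) (a b : R) (ha : IsUnit a) :
    (Finset.univ.filter fun x : Rˣ =>
      (K : R) * (c : R) * (a * ((x ^ K : Rˣ) : R) - b * (((x ^ K)⁻¹ : Rˣ) : R)) = 0).card ≤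
      2 * K * (K * c) := by
  set X := (Finset.univ.filter fun x : Rˣ =>
      (K : R) * (c : R) * (a * ((x ^ K : Rˣ) : R) - b * (((x ^ K)⁻¹ : Rˣ) : R)) = 0) with hX
  rcases X.eq_empty_or_nonempty with h | ⟨x0, hx0⟩
  · rw [h]; simp
  rw [hX, Finset.mem_filter] at hx0
  have hZ : (Finset.univ.filter fun w : R => (K * c) • w = 0).card ≤ K * c :=
    IsAddCyclic.card_nsmul_eq_zero_le (Nat.mul_pos hK hc)
  have h1 : X.card ≤ 2 * K * (Finset.univ.filter fun w : R => (K * c) • w = 0).card := by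
    refine Finset.card_le_mul_card_image_of_maps_to
      (f := fun x : Rˣ => (((x * x0⁻¹) ^ (2 * K) : Rˣ) : R) - 1) ?_ _ ?_
    · intro x hx
      rw [hX, Finset.mem_filter] at hx
      rw [Finset.mem_filter]
      refine ⟨Finset.mem_univ _, ?_⟩
      rw [nsmul_eq_mul]
      push_cast
      have e0 := hx0.2
      have e1 := hx.2
      simp only [← inv_pow, Units.val_pow_eq_pow_val, Units.val_mul, mul_pow, pow_mul] at e0 e1 ⊢
      generalize hg : (K : R) * c = d at *
      have i0 : (x0 : R) ^ K * ((x0⁻¹ : Rˣ) : R) ^ K = 1 := by rw [← mul_pow]; simp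
      have i1 : (x : R) ^ K * ((x⁻¹ : Rˣ) : R) ^ K = 1 := by rw [← mul_pow]; simp
      have j : ∀ (y : R) , (y ^ 2) ^ K = (y ^ K) ^ 2 := fun y => by rw [← pow_mul, ← pow_mul, mul_comm]
      rw [j, j]
      generalize (x0 : R) ^ K = X0 at *
      generalize ((x0⁻¹ : Rˣ) : R) ^ K = Y0 at *
      generalize (x : R) ^ K = X1 at *
      generalize ((x⁻¹ : Rˣ) : R) ^ K = Y1 at *
      have : a * (d * (X1 ^ 2 * Y0 ^ 2 - 1)) = 0 := by
        have s1 : d * (a * X1 ^ 2 - b) = 0 := by linear_combination X1 * e1 + d * b * i1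
        have s0 : d * (a * X0 ^ 2 - b) = 0 := by linear_combination X0 * e0 + d * b * i0
        have i2 : X0 ^ 2 * Y0 ^ 2 = 1 := by rw [← mul_pow, i0, one_pow]
        linear_combination Y0 ^ 2 * (s1 - s0) + d * a * i2
      exact (ha.mul_right_eq_zero).1 this
    · intro w _
      by_cases hne : (X.filter fun x : Rˣ => (((x * x0⁻¹) ^ (2 * K) : Rˣ) : R) - 1 = w).Nonempty
      · obtain ⟨x1, hx1⟩ := hne
        rw [Finset.mem_filter] at hx1
        refine le_trans (Finset.card_le_card_of_injOn (fun x => x * x1⁻¹) ?_ ?_)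
          (IsCyclic.card_pow_eq_one_le (α := Rˣ) (n := 2 * K) (by omega))
        · intro x hx
          have hx := (Finset.mem_filter.1 hx).2
          have := hx.trans hx1.2.symm
          have h2 : (x * x0⁻¹) ^ (2 * K) = (x1 * x0⁻¹) ^ (2 * K) := Units.ext (sub_left_injective this)
          rw [mul_pow, mul_pow] at h2
          have h3 := mul_right_cancel h2
          simp only [Finset.coe_filter, Finset.mem_univ, true_and, Set.mem_setOf_eq]
          rw [mul_pow, h3, ← mul_pow, mul_inv_cancel, one_pow]
        · intro x _ y _ hxy
          exact mul_right_cancel hxy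
      · rw [Finset.not_nonempty_iff_eq_empty.1 hne]; simp
  exact h1.trans (Nat.mul_le_mul_left _ hZ)

theorem mem_filter_expl {α : Type*} (s : Finset α) (P : α → Prop) (inst : DecidablePred P) (x : α) :
    x ∈ @Finset.filter α P inst s ↔ x ∈ s ∧ P x := Finset.mem_filter

theorem klS_prime_pow_unit (p r n : ℕ) [NeZero n] (hp : p.Prime) (hp2 : Odd p) (hr : 0 < r) (hn : n = p ^ r)
    (K : ℕ) (hK : 0 < K) (a b : ZMod n) (ha : IsUnit a) (ψ : AddChar (ZMod n) ℂ) (hψ : ψ.IsPrimitive) :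
    ‖klS ψ K a b‖ ≤ 2 * (K : ℝ) ^ 3 * Real.sqrt n := by
  have hcyc : IsCyclic (ZMod n)ˣ :=
    (ZMod.isCyclic_units_iff_of_odd (by rw [hn]; exact hp2.pow)).2 ⟨p, r, hp, hp2, hn⟩
  have hp0 : (0 : ℝ) < p := by exact_mod_cast hp.pos
  have hK1 : (1 : ℝ) ≤ K := by exact_mod_cast hK
  have hpn : (p : ZMod n) ^ r = 0 := by
    rw [← Nat.cast_pow, ← hn]; exact ZMod.natCast_self n
  have hpn' : ∀ m, r ≤ m → (p : ZMod n) ^ m = 0 := fun m hm => pow_eq_zero_of_le hm hpn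
  have hbasic : ∀ m, r ≤ 2 * m → ‖klS ψ K a b‖ ≤ 2 * (K : ℝ) ^ 2 * (p : ℝ) ^ m := by
    intro m hm
    have h1 := klS_le_count ψ hψ K a b ((p ^ m : ℕ) : ZMod n)
      (by push_cast; rw [← pow_mul]; exact hpn' _ (by omega))
    have h2 := klS_count K (p ^ m) hK (pow_pos hp.pos m) a b ha
    refine h1.trans ?_
    calc _ ≤ ((2 * K * (K * p ^ m) : ℕ) : ℝ) := by exact_mod_cast h2
      _ = _ := by push_cast; ring
  rcases Nat.even_or_odd' r with ⟨s, hs | hs⟩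
  · have h := hbasic s hs.le
    have hsq : Real.sqrt n = (p : ℝ) ^ s := by
      rw [hn, hs]; push_cast; rw [mul_comm, pow_mul]; exact Real.sqrt_sq (by positivity)
    rw [hsq]
    refine h.trans ?_
    have : (K : ℝ) ^ 2 ≤ (K : ℝ) ^ 3 := pow_le_pow_right₀ hK1 (by norm_num)
    gcongr
  have hsq : Real.sqrt n = (p : ℝ) ^ s * Real.sqrt p := by
    rw [hn, hs]; push_cast
    rw [pow_succ, mul_comm 2 s, pow_mul, Real.sqrt_mul (by positivity), Real.sqrt_sq (by positivity)]
  have hpp : Real.sqrt p * Real.sqrt p = p := Real.mul_self_sqrt hp0.le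
  have hsp : 1 ≤ Real.sqrt p := by
    rw [Real.one_le_sqrt]; exact_mod_cast hp.one_le
  by_cases hpK : p ∣ K
  · have h := hbasic (s + 1) (by omega)
    have hle : (p : ℝ) ≤ K := by exact_mod_cast Nat.le_of_dvd hK hpK
    have hle2 : Real.sqrt p ≤ K := by nlinarith
    rw [hsq]
    calc _ ≤ _ := h
      _ = 2 * (K : ℝ) ^ 2 * Real.sqrt p * (p ^ s * Real.sqrt p) := by
        rw [pow_succ]; linear_combination (-2 * (K : ℝ) ^ 2 * p ^ s) * hpp
      _ ≤ 2 * (K : ℝ) ^ 2 * K * (p ^ s * Real.sqrt p) := by gcongr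
      _ = _ := by ring
  rcases Nat.eq_zero_or_pos s with hs0 | hs0
  · subst hs0
    have hnp : n = p := by rw [hn, hs]; simp
    subst hnp
    have : Fact (n.Prime) := ⟨hp⟩
    have hψ1 : ψ ≠ 1 := by
      have := hψ (one_ne_zero)
      rwa [AddChar.mulShift_one] at this
    have h := kloosterman_prime n K hK a b (Or.inl ha.ne_zero) ψ hψ1
    have e : klS ψ K a b = ∑ m : (ZMod n)ˣ, ψ (a * ((m ^ K : (ZMod n)ˣ) : ZMod n) + b * (((m ^ K)⁻¹ : (ZMod n)ˣ) : ZMod n)) := by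
      unfold klS
      exact Finset.sum_congr (Finset.ext fun _ => by simp) fun _ _ => rfl
    rw [e]
    refine h.trans ?_
    have : (K : ℝ) ≤ (K : ℝ) ^ 3 := le_self_pow₀ hK1 (by norm_num)
    gcongr
  · have hunit : ∀ m : ℕ, m.Coprime p → IsUnit (m : ZMod n) := by
      intro m hm
      rw [ZMod.isUnit_iff_coprime, hn]
      exact Nat.Coprime.pow_right r hm
    have h2u : IsUnit (2 : ZMod n) := by
      have := hunit 2 (by
        rw [Nat.coprime_two_left]; exact hp2)
      exact_mod_cast this
    have hKu : IsUnit (K : ZMod n) := hunit K ((Nat.Prime.coprime_iff_not_dvd hp).2 hpK).symm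
    have hcard : (Fintype.card (ZMod n) : ℝ) = (p : ℝ) ^ (2 * s) * p := by
      rw [ZMod.card, hn, hs]; push_cast; ring
    have h := klS_le_odd ψ hψ K a b ((p ^ s : ℕ) : ZMod n) (p : ZMod n)
      (by push_cast; rw [← pow_mul]; exact hpn' _ (by omega))
      (by push_cast; rw [← pow_mul, ← pow_succ']; exact hpn' _ (by omega)) (1 / Real.sqrt p) ?_ (by positivity)
    · have hc := klS_count K (p ^ (s + 1)) hK (pow_pos hp.pos _) a b ha
      have hce : (p : ZMod n) * ((p ^ s : ℕ) : ZMod n) = ((p ^ (s + 1) : ℕ) : ZMod n) := by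
        push_cast; ring
      rw [hce] at h
      rw [hsq]
      refine (h.trans (mul_le_mul_of_nonneg_right (Nat.cast_le.2 hc) (by positivity))).trans ?_
      have e : ((2 * K * (K * p ^ (s + 1)) : ℕ) : ℝ) * (1 / Real.sqrt p) = 2 * (K : ℝ) ^ 2 * (p ^ s * Real.sqrt p) := by
        push_cast
        rw [mul_one_div, div_eq_iff (by positivity), pow_succ]
        linear_combination (-2 * (K : ℝ) ^ 2 * p ^ s) * hpp
      rw [e]
      have : (K : ℝ) ^ 2 ≤ (K : ℝ) ^ 3 := pow_le_pow_right₀ hK1 (by norm_num)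
      gcongr
    · intro x hx
      have hR : (Fintype.card (ZMod n) : ℝ) * (1 / Real.sqrt p) ^ 2 = ((p ^ (2 * s) : ℕ) : ℝ) := by
        rw [hcard, div_pow, one_pow, Real.sq_sqrt hp0.le]; push_cast; field_simp
      rw [hR, Nat.cast_le]
      refine le_trans (Finset.card_le_card ?_) (IsAddCyclic.card_nsmul_eq_zero_le (α := ZMod n) (n := p ^ (2 * s)) (pow_pos hp.pos _))
      intro h hh
      have hh := ((mem_filter_expl _ _ _ _).1 hh).2
      refine (mem_filter_expl _ _ _ _).2 ⟨Finset.mem_univ _, ?_⟩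
      have c1 : (2 : ZMod n) * (K.choose 2 : ℕ) = K * (K - 1) := by
        have := Nat.choose_two_right K
        have h2 : 2 * K.choose 2 = K * (K - 1) := by
          rw [this]; exact Nat.mul_div_cancel' (Nat.even_mul_pred_self K).two_dvd
        have h3 : ((2 * K.choose 2 : ℕ) : ZMod n) = ((K * (K - 1) : ℕ) : ZMod n) := by rw [h2]
        rw [Nat.cast_mul, Nat.cast_mul, Nat.cast_sub hK] at h3
        simpa using h3
      have c2 : (2 : ZMod n) * ((K + 1).choose 2 : ℕ) = K * (K + 1) := by
        have e : (K + 1).choose 2 = K + K.choose 2 := by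
          rw [Nat.choose_succ_succ' K 1, Nat.choose_one_right]
        rw [e]; push_cast; linear_combination c1
      have hAB : (p : ZMod n) ^ (2 * s) * (a * ((x ^ K : (ZMod n)ˣ) : ZMod n) - b * (((x ^ K)⁻¹ : (ZMod n)ˣ) : ZMod n)) = 0 := by
        rw [mul_assoc] at hx
        have h1 := (hKu.mul_right_eq_zero).1 hx
        rw [show 2 * s = (s - 1) + (s + 1) by omega, pow_add, mul_assoc, pow_succ' _ s]
        rw [Nat.cast_pow] at h1
        rw [h1, mul_zero]
      have hu : IsUnit (2 * (K : ZMod n) ^ 2 * (a * ((x ^ K : (ZMod n)ˣ) : ZMod n))) :=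
        (h2u.mul (hKu.pow 2)).mul (ha.mul (Units.isUnit _))
      apply (hu.mul_right_eq_zero).1
      rw [nsmul_eq_mul]
      push_cast at hh ⊢
      generalize a * ((x ^ K : (ZMod n)ˣ) : ZMod n) = A at *
      generalize b * (((x ^ K)⁻¹ : (ZMod n)ˣ) : ZMod n) = B at *
      rw [← pow_mul, mul_comm s 2] at hh
      linear_combination hh + K * (K + 1) * h * hAB - (p : ZMod n) ^ (2 * s) * h * A * c1 - (p : ZMod n) ^ (2 * s) * h * B * c2

theorem klS_prime_pow (p r n : ℕ) [NeZero n] (hp : p.Prime) (hp2 : Odd p) (hr : 0 < r) (hn : n = p ^ r)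
    (K : ℕ) (hK : 0 < K) (a b : ZMod n) (hab : IsUnit a ∨ IsUnit b) (ψ : AddChar (ZMod n) ℂ) (hψ : ψ.IsPrimitive) :
    ‖klS ψ K a b‖ ≤ 2 * (K : ℝ) ^ 3 * Real.sqrt n := by
  rcases hab with h | h
  · exact klS_prime_pow_unit p r n hp hp2 hr hn K hK a b h ψ hψ
  · rw [klS_swap]; exact klS_prime_pow_unit p r n hp hp2 hr hn K hK b a h ψ hψ

noncomputable def kl2 {R : Type*} [CommRing R] [Fintype R] (ψ₁ ψ₂ : AddChar R ℂ) (K : ℕ) : ℂ :=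
  ∑ x : Rˣ, ψ₁ ((x ^ K : Rˣ) : R) * ψ₂ (((x ^ K)⁻¹ : Rˣ) : R)

def primPair {R : Type*} [CommRing R] (ψ₁ ψ₂ : AddChar R ℂ) : Prop :=
  ∀ c : R, (∀ x, ψ₁ (c * x) = 1 ∧ ψ₂ (c * x) = 1) → c = 0

theorem klS_eq_kl2 {R : Type*} [CommRing R] [Fintype R] (ψ : AddChar R ℂ) (K : ℕ) (a b : R) :
    klS ψ K a b = kl2 (ψ.mulShift a) (ψ.mulShift b) K := by
  unfold klS kl2
  simp_rw [AddChar.mulShift_apply, AddChar.map_add_eq_mul]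

theorem kl2_prod {R R₁ R₂ : Type*} [CommRing R] [Fintype R] [CommRing R₁] [Fintype R₁] [CommRing R₂] [Fintype R₂]
    (e : R ≃+* R₁ × R₂) (ψ₁ ψ₂ : AddChar R ℂ) (h : primPair ψ₁ ψ₂) (K : ℕ) :
    ∃ (φ₁ φ₂ : AddChar R₁ ℂ) (θ₁ θ₂ : AddChar R₂ ℂ), primPair φ₁ φ₂ ∧ primPair θ₁ θ₂ ∧
      kl2 ψ₁ ψ₂ K = kl2 φ₁ φ₂ K * kl2 θ₁ θ₂ K := by
  let f₁ : R₁ →+ R := (e.symm : R₁ × R₂ →+ R).comp (AddMonoidHom.inl R₁ R₂)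
  let f₂ : R₂ →+ R := (e.symm : R₁ × R₂ →+ R).comp (AddMonoidHom.inr R₁ R₂)
  refine ⟨ψ₁.compAddMonoidHom f₁, ψ₂.compAddMonoidHom f₁, ψ₁.compAddMonoidHom f₂,
    ψ₂.compAddMonoidHom f₂, ?_, ?_, ?_⟩
  · intro c hc
    have := h (e.symm (c, 0)) (by
      intro x
      have h1 := hc (e x).1
      have h2 : f₁ (c * (e x).1) = e.symm (c, 0) * x := by
        apply e.injective
        simp [f₁, Prod.ext_iff]
      simpa only [AddChar.compAddMonoidHom_apply, h2] using h1)
    have h3 := congrArg e this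
    simpa using h3
  · intro c hc
    have := h (e.symm (0, c)) (by
      intro x
      have h1 := hc (e x).2
      have h2 : f₂ (c * (e x).2) = e.symm (0, c) * x := by
        apply e.injective
        simp [f₂, Prod.ext_iff]
      simpa only [AddChar.compAddMonoidHom_apply, h2] using h1)
    have h3 := congrArg e this
    simpa using h3
  · unfold kl2
    rw [Finset.sum_mul_sum, ← Finset.sum_product', Finset.univ_product_univ]
    let E : Rˣ ≃* R₁ˣ × R₂ˣ := (Units.mapEquiv e.toMulEquiv).trans MulEquiv.prodUnits
    rw [← Equiv.sum_comp E.toEquiv]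
    refine Finset.sum_congr rfl fun x _ => ?_
    have key : ∀ y : Rˣ, f₁ ((E y).1 : R₁) + f₂ ((E y).2 : R₂) = y := by
      intro y
      apply e.injective
      simp [f₁, f₂, E, Prod.ext_iff]
      exact ⟨rfl, rfl⟩
    have hs : ∀ (ψ : AddChar R ℂ) (y : Rˣ), ψ (y : R) =
        ψ.compAddMonoidHom f₁ ((E y).1 : R₁) * ψ.compAddMonoidHom f₂ ((E y).2 : R₂) := by
      intro ψ y
      rw [AddChar.compAddMonoidHom_apply, AddChar.compAddMonoidHom_apply, ← AddChar.map_add_eq_mul, key]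
    rw [hs ψ₁, hs ψ₂]
    have e1 : E (x ^ K) = (E x) ^ K := map_pow E x K
    have e2 : E (x ^ K)⁻¹ = ((E x) ^ K)⁻¹ := by rw [map_inv, map_pow]
    rw [e1, e2]
    change _ = (ψ₁.compAddMonoidHom f₁ (((E x).1 ^ K : R₁ˣ) : R₁) * ψ₂.compAddMonoidHom f₁ ((((E x).1 ^ K)⁻¹ : R₁ˣ) : R₁)) *
      (ψ₁.compAddMonoidHom f₂ (((E x).2 ^ K : R₂ˣ) : R₂) * ψ₂.compAddMonoidHom f₂ ((((E x).2 ^ K)⁻¹ : R₂ˣ) : R₂))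
    rw [Prod.fst_inv, Prod.snd_inv, Prod.pow_fst, Prod.pow_snd]
    ring

theorem exists_mulShift_std (n : ℕ) [NeZero n] (φ : AddChar (ZMod n) ℂ) :
    ∃ a : ZMod n, (ZMod.stdAddChar (N := n)).mulShift a = φ := by
  have : Function.Bijective (AddChar.mulShift (ZMod.stdAddChar (N := n))) := by
    rw [Fintype.bijective_iff_injective_and_card]
    exact ⟨AddChar.to_mulShift_inj_of_isPrimitive (ZMod.isPrimitive_stdAddChar n), AddChar.card_eq.symm⟩
  exact this.2 φ

theorem kl2_bound (K : ℕ) (hK : 0 < K) (q : ℕ) : ∀ [NeZero q], Odd q → ∀ (ψ₁ ψ₂ : AddChar (ZMod q) ℂ),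
    primPair ψ₁ ψ₂ → ‖kl2 ψ₁ ψ₂ K‖ ≤ (2 * (K : ℝ) ^ 3) ^ (q.primeFactors.card) * Real.sqrt q := by
  induction q using Nat.recOnPosPrimePosCoprime with
  | zero => intro h; exact absurd rfl h.out
  | one =>
    intro _ _ ψ₁ ψ₂ _
    unfold kl2
    refine (norm_sum_le_of_le (n := fun _ => (1 : ℝ)) _ fun x _ => ?_).trans ?_
    · rw [norm_mul, AddChar.norm_apply, AddChar.norm_apply, one_mul]
    · simp
  | prime_pow p r hp hr =>
    intro _ hodd ψ₁ ψ₂ hprim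
    obtain ⟨a, rfl⟩ := exists_mulShift_std _ ψ₁
    obtain ⟨b, rfl⟩ := exists_mulShift_std _ ψ₂
    rw [← klS_eq_kl2]
    have hp2 : Odd p := by
      rcases Nat.even_or_odd p with h | h
      · exact absurd (h.pow_of_ne_zero hr.ne') (Nat.not_even_iff_odd.2 hodd)
      · exact h
    have hab : IsUnit a ∨ IsUnit b := by
      by_contra hcon
      push Not at hcon
      have hdv : ∀ a : ZMod (p ^ r), ¬ IsUnit a → ((p ^ (r - 1) : ℕ) : ZMod (p ^ r)) * a = 0 := by
        intro a ha
        have h1 : ¬ (a.val).Coprime (p ^ r) := by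
          intro h; apply ha
          rw [← ZMod.natCast_zmod_val a]; exact (ZMod.isUnit_iff_coprime _ _).2 h
        have h2 : p ∣ a.val := by
          by_contra h
          exact h1 (Nat.Coprime.pow_right r ((Nat.Prime.coprime_iff_not_dvd hp).2 h).symm)
        obtain ⟨m, hm⟩ := h2
        rw [← ZMod.natCast_zmod_val a, hm, ← Nat.cast_mul, ← mul_assoc, ← pow_succ, Nat.sub_add_cancel hr,
          Nat.cast_mul, ZMod.natCast_self, zero_mul]
      have h0 := hprim ((p ^ (r - 1) : ℕ) : ZMod (p ^ r)) (by
        intro x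
        rw [AddChar.mulShift_apply, AddChar.mulShift_apply]
        have h1 := hdv a hcon.1
        have h2 := hdv b hcon.2
        rw [← mul_assoc, mul_comm a, h1, ← mul_assoc, mul_comm b, h2, zero_mul, AddChar.map_zero_eq_one]
        exact ⟨rfl, rfl⟩)
      rw [ZMod.natCast_eq_zero_iff] at h0
      have := (Nat.pow_dvd_pow_iff_le_right hp.one_lt).1 h0
      omega
    have := klS_prime_pow p r (p ^ r) hp hp2 hr rfl K hK a b hab _ (ZMod.isPrimitive_stdAddChar _)
    rw [Nat.primeFactors_prime_pow hr.ne' hp, Finset.card_singleton, pow_one]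
    exact this
  | coprime a b ha hb hab iha ihb =>
    intro _ hodd ψ₁ ψ₂ hprim
    have : NeZero a := ⟨by omega⟩
    have : NeZero b := ⟨by omega⟩
    obtain ⟨φ₁, φ₂, θ₁, θ₂, h1, h2, h3⟩ := kl2_prod (ZMod.chineseRemainder hab) ψ₁ ψ₂ hprim K
    rw [Nat.odd_mul] at hodd
    have e1 := iha hodd.1 φ₁ φ₂ h1
    have e2 := ihb hodd.2 θ₁ θ₂ h2
    rw [h3, norm_mul, hab.primeFactors_mul, Finset.card_union_of_disjoint hab.disjoint_primeFactors, pow_add,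
      Nat.cast_mul, Real.sqrt_mul (Nat.cast_nonneg a)]
    calc _ ≤ ((2 * (K : ℝ) ^ 3) ^ (a.primeFactors.card) * Real.sqrt a) * ((2 * (K : ℝ) ^ 3) ^ (b.primeFactors.card) * Real.sqrt b) :=
          mul_le_mul e1 e2 (norm_nonneg _) (by positivity)
      _ = _ := by ring

theorem std_reduce (g d : ℕ) [NeZero (g * d)] [NeZero d] (v : ℕ) (x : ZMod (g * d)) :
    ZMod.stdAddChar (((g * v : ℕ) : ZMod (g * d)) * x) =
      ZMod.stdAddChar ((v : ZMod d) * (ZMod.castHom (Dvd.intro_left g rfl) (ZMod d) x)) := by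
  have hg : (g : ℂ) ≠ 0 := by
    intro h
    have : g = 0 := by exact_mod_cast h
    exact NeZero.ne (g * d) (by rw [this, zero_mul])
  have hd : (d : ℂ) ≠ 0 := by exact_mod_cast NeZero.ne d
  obtain ⟨j, rfl⟩ := ZMod.intCast_surjective x
  rw [map_intCast]
  have h1 : ((g * v : ℕ) : ZMod (g * d)) * (j : ZMod (g * d)) = ((g * v * j : ℤ) : ZMod (g * d)) := by
    push_cast; ring
  have h2 : (v : ZMod d) * (j : ZMod d) = ((v * j : ℤ) : ZMod d) := by
    push_cast; ring
  rw [h1, h2, ZMod.stdAddChar_coe, ZMod.stdAddChar_coe]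
  congr 1
  push_cast
  field_simp

theorem klS_reduce (K g d : ℕ) [NeZero (g * d)] [NeZero d] (v w : ℕ) :
    ‖klS (ZMod.stdAddChar (N := g * d)) K ((g * v : ℕ) : ZMod (g * d)) ((g * w : ℕ) : ZMod (g * d))‖ ≤
      g * ‖klS (ZMod.stdAddChar (N := d)) K (v : ZMod d) (w : ZMod d)‖ := by
  have hg : 0 < g := Nat.pos_of_ne_zero fun h => NeZero.ne (g * d) (by rw [h, zero_mul])
  have hdvd : d ∣ g * d := Dvd.intro_left g rfl
  let f := ZMod.unitsMap hdvd
  let F : (ZMod d)ˣ → ℂ := fun y => ZMod.stdAddChar ((v : ZMod d) * ((y ^ K : (ZMod d)ˣ) : ZMod d) +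
    (w : ZMod d) * (((y ^ K)⁻¹ : (ZMod d)ˣ) : ZMod d))
  have h1 : klS (ZMod.stdAddChar (N := g * d)) K ((g * v : ℕ) : ZMod (g * d)) ((g * w : ℕ) : ZMod (g * d)) =
      ∑ x : (ZMod (g * d))ˣ, F (f x) := by
    unfold klS
    refine Finset.sum_congr (Finset.ext fun _ => by simp) fun x _ => ?_
    simp only [F]
    rw [AddChar.map_add_eq_mul, AddChar.map_add_eq_mul, std_reduce, std_reduce, ← map_pow f, ← map_inv f]
    rfl
  have h2 : klS (ZMod.stdAddChar (N := d)) K (v : ZMod d) (w : ZMod d) = ∑ y : (ZMod d)ˣ, F y := by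
    unfold klS
    exact Finset.sum_congr (Finset.ext fun _ => by simp) fun x _ => rfl
  have hsurj : Function.Surjective f := ZMod.unitsMap_surjective hdvd
  have hfib : ∀ y, (Finset.univ.filter fun x => f x = y).card = (Finset.univ.filter fun x => f x = 1).card :=
    fun y => MonoidHom.card_fiber_eq_of_mem_range f (hsurj y) (hsurj 1)
  have hker : (Finset.univ.filter fun x => f x = 1).card ≤ g := by
    refine le_trans (Finset.card_le_card_of_injOn (fun x => (x : ZMod (g * d)) - 1) ?_ ?_)
      (IsAddCyclic.card_nsmul_eq_zero_le (α := ZMod (g * d)) hg)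
    · intro x hx
      have hx := (Finset.mem_filter.1 hx).2
      simp only [Finset.coe_filter, Finset.mem_univ, true_and, Set.mem_setOf_eq]
      have h3 : ZMod.castHom hdvd (ZMod d) ((x : ZMod (g * d)) - 1) = 0 := by
        have : ((f x : (ZMod d)ˣ) : ZMod d) = 1 := by rw [hx]; rfl
        rw [map_sub, map_one, sub_eq_zero]; exact this
      obtain ⟨j, hj⟩ := ZMod.intCast_surjective ((x : ZMod (g * d)) - 1)
      rw [← hj] at h3 ⊢
      rw [map_intCast, ZMod.intCast_zmod_eq_zero_iff_dvd] at h3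
      obtain ⟨m, rfl⟩ := h3
      rw [nsmul_eq_mul]
      have : ((g * d : ℕ) : ZMod (g * d)) = 0 := ZMod.natCast_self _
      push_cast at this ⊢
      rw [← mul_assoc, this, zero_mul]
    · intro x _ y _ hxy
      exact Units.ext (sub_left_injective hxy)
  have h3 : ∑ x : (ZMod (g * d))ˣ, F (f x) = (Finset.univ.filter fun x => f x = 1).card * ∑ y, F y := by
    rw [← Finset.sum_fiberwise (s := Finset.univ) (g := f), Finset.mul_sum]
    refine Finset.sum_congr rfl fun y _ => ?_
    rw [Finset.sum_congr rfl (g := fun _ => F y), Finset.sum_const, hfib, nsmul_eq_mul]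
    intro x hx
    rw [(Finset.mem_filter.1 hx).2]
  rw [h1, h2, h3, norm_mul, Complex.norm_natCast]
  exact mul_le_mul_of_nonneg_right (by exact_mod_cast hker) (norm_nonneg _)

theorem klS_bound (K : ℕ) (hK : 0 < K) (q : ℕ) [NeZero q] (hq : Odd q) (u w : ℕ) :
    ‖klS (ZMod.stdAddChar (N := q)) K (u : ZMod q) (w : ZMod q)‖ ≤
      (2 * (K : ℝ) ^ 3) ^ (q.primeFactors.card) * Real.sqrt q * Real.sqrt (Nat.gcd (Nat.gcd u w) q) := by
  obtain ⟨g, hg⟩ : ∃ g, g = Nat.gcd (Nat.gcd u w) q := ⟨_, rfl⟩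
  have hq0 : 0 < q := Nat.pos_of_ne_zero (NeZero.ne q)
  have hg0 : 0 < g := hg ▸ Nat.gcd_pos_of_pos_right _ hq0
  rw [← hg]
  obtain ⟨d, hd⟩ : g ∣ q := hg ▸ Nat.gcd_dvd_right _ _
  obtain ⟨v, hv⟩ : g ∣ u := hg ▸ (Nat.gcd_dvd_left _ _).trans (Nat.gcd_dvd_left _ _)
  obtain ⟨t, ht⟩ : g ∣ w := hg ▸ (Nat.gcd_dvd_left _ _).trans (Nat.gcd_dvd_right _ _)
  have hd0 : NeZero d := ⟨by rintro rfl; omega⟩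
  subst hd hv ht
  have hcop : Nat.gcd (Nat.gcd v t) d = 1 := by
    rw [Nat.gcd_mul_left, Nat.gcd_mul_left] at hg
    exact Nat.eq_of_mul_eq_mul_left hg0 (by rw [← hg, mul_one])
  have h1 := klS_reduce K g d v t
  have hodd : Odd d := (Nat.odd_mul.1 hq).2
  have hprim : primPair ((ZMod.stdAddChar (N := d)).mulShift (v : ZMod d)) ((ZMod.stdAddChar (N := d)).mulShift (t : ZMod d)) := by
    intro c hc
    have hz : ∀ v : ℕ, (∀ x, (ZMod.stdAddChar (N := d)).mulShift (v : ZMod d) (c * x) = 1) → d ∣ v * c.val := by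
      intro v hv
      have h0 : (v : ZMod d) * c = 0 := by
        by_contra hne
        apply ZMod.isPrimitive_stdAddChar d hne
        ext x
        rw [AddChar.mulShift_apply, AddChar.one_apply, mul_assoc]
        exact hv x
      rw [← ZMod.natCast_eq_zero_iff]
      push_cast
      rw [ZMod.natCast_zmod_val]; exact h0
    have d1 := hz v fun x => (hc x).1
    have d2 := hz t fun x => (hc x).2
    have d3 : d ∣ Nat.gcd v t * c.val := by rw [← Nat.gcd_mul_right]; exact Nat.dvd_gcd d1 d2
    have d4 : d ∣ c.val := Nat.Coprime.dvd_of_dvd_mul_left (Nat.Coprime.symm hcop) d3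
    rw [← ZMod.natCast_eq_zero_iff, ZMod.natCast_zmod_val] at d4
    exact d4
  have h2 := kl2_bound K hK d hodd _ _ hprim
  rw [← klS_eq_kl2] at h2
  have hC : 1 ≤ 2 * (K : ℝ) ^ 3 := by
    have : (1 : ℝ) ≤ K := by exact_mod_cast hK
    have : (1 : ℝ) ≤ (K : ℝ) ^ 3 := one_le_pow₀ this
    linarith
  have hle : (2 * (K : ℝ) ^ 3) ^ (d.primeFactors.card) ≤ (2 * (K : ℝ) ^ 3) ^ ((g * d).primeFactors.card) :=
    pow_le_pow_right₀ hC (Finset.card_le_card (Nat.primeFactors_mono (Dvd.intro_left g rfl) (NeZero.ne _)))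
  have hgg : Real.sqrt g * Real.sqrt g = g := Real.mul_self_sqrt (Nat.cast_nonneg g)
  calc _ ≤ _ := h1
    _ ≤ g * ((2 * (K : ℝ) ^ 3) ^ ((g * d).primeFactors.card) * Real.sqrt d) := by
        gcongr
        refine h2.trans ?_
        gcongr
    _ = _ := by
        rw [Nat.cast_mul, Real.sqrt_mul (Nat.cast_nonneg g)]
        linear_combination (-(2 * (K : ℝ) ^ 3) ^ ((g * d).primeFactors.card) * Real.sqrt d) * hgg

noncomputable def parC {q : ℕ} (x : ZMod q) : ℂ := (-1) ^ x.val

noncomputable def parF {q : ℕ} [NeZero q] (u : ZMod q) : ℂ :=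
  (q : ℂ)⁻¹ * ∑ y : ZMod q, parC y * ZMod.stdAddChar (-(u * y))

noncomputable def parV {q : ℕ} (u : ZMod q) : ℕ := ((q : ℤ) - 2 * (u.val : ℤ)).natAbs

theorem parC_expand {q : ℕ} [NeZero q] (x : ZMod q) :
    parC x = ∑ u : ZMod q, parF u * ZMod.stdAddChar (u * x) := by
  have hq : (q : ℂ) ≠ 0 := by exact_mod_cast NeZero.ne q
  have h1 : ∀ u : ZMod q, parF u * ZMod.stdAddChar (u * x) =
      (q : ℂ)⁻¹ * ∑ y : ZMod q, parC y * ZMod.stdAddChar (u * (x - y)) := by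
    intro u
    rw [parF, mul_assoc, Finset.sum_mul]
    congr 1
    refine Finset.sum_congr rfl fun y _ => ?_
    rw [mul_assoc, ← AddChar.map_add_eq_mul]
    congr 2
    ring
  rw [Finset.sum_congr rfl fun u _ => h1 u, ← Finset.mul_sum, Finset.sum_comm]
  simp_rw [← Finset.mul_sum]
  rw [Finset.sum_eq_single x]
  · rw [AddChar.sum_mulShift _ (ZMod.isPrimitive_stdAddChar q), if_pos (sub_self x), ZMod.card]
    field_simp
  · intro y _ hy
    rw [AddChar.sum_mulShift _ (ZMod.isPrimitive_stdAddChar q), if_neg (sub_ne_zero.2 hy.symm)]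
    simp
  · intro h; exact absurd (Finset.mem_univ _) h

theorem parV_pos {q : ℕ} (hq : Odd q) (u : ZMod q) : 0 < parV u := by
  obtain ⟨m, hm⟩ := hq
  unfold parV; omega

theorem parV_le {q : ℕ} [NeZero q] (u : ZMod q) : parV u ≤ q := by
  have := ZMod.val_lt u
  unfold parV; omega

theorem one_add_exp_norm (θ : ℝ) : ‖1 + Complex.exp (θ * Complex.I)‖ = 2 * |Real.cos (θ / 2)| := by
  have h : 1 + Complex.exp (θ * Complex.I) = Complex.exp ((θ / 2 : ℝ) * Complex.I) * ((2 * Real.cos (θ / 2) : ℝ) : ℂ) := by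
    push_cast
    rw [Complex.cos, mul_div_cancel₀ _ (two_ne_zero), mul_add, ← Complex.exp_add, ← Complex.exp_add]
    ring_nf
    rw [Complex.exp_zero]
    ring
  rw [h, norm_mul, Complex.norm_exp_ofReal_mul_I, one_mul, Complex.norm_real, Real.norm_eq_abs, abs_mul,
    abs_two]

theorem parF_norm {q : ℕ} [NeZero q] (hq : Odd q) (u : ZMod q) : ‖parF u‖ ≤ 1 / (parV u : ℝ) := by
  have hq0 : (0 : ℝ) < q := by exact_mod_cast Nat.pos_of_ne_zero (NeZero.ne q)
  have hv0 : (0 : ℝ) < parV u := by exact_mod_cast parV_pos hq u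
  set ζ : ℂ := ZMod.stdAddChar (-u) with hζ
  have hζq : ζ ^ q = 1 := by
    rw [hζ, ← AddChar.map_nsmul_eq_pow, nsmul_eq_mul, ZMod.natCast_self, zero_mul, AddChar.map_zero_eq_one]
  have hsum : ∑ y : ZMod q, parC y * ZMod.stdAddChar (-(u * y)) = ∑ j ∈ Finset.range q, (-ζ) ^ j := by
    refine Finset.sum_nbij' (fun y => y.val) (fun j => (j : ZMod q)) ?_ ?_ ?_ ?_ ?_
    · intro y _; exact Finset.mem_range.2 (ZMod.val_lt y)
    · intro j _; exact Finset.mem_univ _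
    · intro y _; exact ZMod.natCast_zmod_val y
    · intro j hj; exact ZMod.val_cast_of_lt (Finset.mem_range.1 hj)
    · intro y _
      rw [parC, neg_pow ζ, hζ, ← AddChar.map_nsmul_eq_pow, nsmul_eq_mul, ZMod.natCast_zmod_val]
      congr 2
      ring
  have hgeom : (∑ j ∈ Finset.range q, (-ζ) ^ j) * (1 + ζ) = 2 := by
    have := geom_sum_mul (-ζ) q
    rw [hq.neg_pow, hζq] at this
    linear_combination -this
  have hζe : ζ = Complex.exp (((-(2 * Real.pi * u.val / q) : ℝ)) * Complex.I) := by
    have h1 : -u = ((-(u.val : ℤ) : ℤ) : ZMod q) := by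
      push_cast; rw [ZMod.natCast_zmod_val]
    rw [hζ, h1, ZMod.stdAddChar_coe]
    congr 1
    push_cast; ring
  have hnorm : 2 * ((parV u : ℝ) / q) ≤ ‖1 + ζ‖ := by
    rw [hζe, one_add_exp_norm]
    have e1 : Real.cos (-(2 * Real.pi * u.val / q) / 2) = Real.sin (Real.pi / 2 - Real.pi * u.val / q) := by
      rw [Real.sin_pi_div_two_sub, ← Real.cos_neg]; congr 1; ring
    rw [e1]
    have e2 : Real.pi / 2 - Real.pi * u.val / q = Real.pi / 2 * (((q : ℝ) - 2 * u.val) / q) := by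
      field_simp
    have e3 : |((q : ℝ) - 2 * u.val)| = parV u := by
      rw [parV, Nat.cast_natAbs]; push_cast; rfl
    have e4 : |Real.pi / 2 - Real.pi * u.val / q| = Real.pi / 2 * (parV u / q) := by
      rw [e2, abs_mul, abs_of_pos Real.pi_div_two_pos, abs_div, e3, abs_of_pos hq0]
    have hle : (parV u : ℝ) / q ≤ 1 := (div_le_one hq0).2 (by exact_mod_cast parV_le u)
    have h5 := Real.mul_abs_le_abs_sin (x := Real.pi / 2 - Real.pi * u.val / q) (by
      rw [e4]; exact mul_le_of_le_one_right Real.pi_div_two_pos.le hle)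
    rw [e4] at h5
    have hpi := Real.pi_ne_zero
    have e6 : 2 / Real.pi * (Real.pi / 2 * (parV u / q)) = (parV u : ℝ) / q := by field_simp
    rw [e6] at h5
    linarith
  have hN := congrArg norm hgeom
  rw [norm_mul, Complex.norm_two] at hN
  have hS : ‖∑ j ∈ Finset.range q, (-ζ) ^ j‖ * ((parV u : ℝ) / q) ≤ 1 := by
    have := mul_le_mul_of_nonneg_left hnorm (norm_nonneg (∑ j ∈ Finset.range q, (-ζ) ^ j))
    linarith
  rw [parF, hsum, norm_mul, norm_inv, Complex.norm_natCast, le_div_iff₀ hv0]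
  calc _ = ‖∑ j ∈ Finset.range q, (-ζ) ^ j‖ * ((parV u : ℝ) / q) := by ring
    _ ≤ 1 := hS

theorem parV_sum {q : ℕ} [NeZero q] (hq : Odd q) (g : ℕ) (hg : 0 < g) :
    ∑ u ∈ (Finset.univ : Finset (ZMod q)).filter (fun u => g ∣ parV u), 1 / (parV u : ℝ) ≤
      2 / g * ∑ m ∈ Finset.Icc 1 q, 1 / (m : ℝ) := by
  have hmaps : ∀ u ∈ (Finset.univ : Finset (ZMod q)).filter (fun u => g ∣ parV u),
      parV u / g ∈ Finset.Icc 1 q := by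
    intro u hu
    have hu := (Finset.mem_filter.1 hu).2
    rw [Finset.mem_Icc]
    exact ⟨Nat.div_pos (Nat.le_of_dvd (parV_pos hq u) hu) hg, (Nat.div_le_self _ _).trans (parV_le u)⟩
  rw [← Finset.sum_fiberwise_of_maps_to hmaps, Finset.mul_sum]
  refine Finset.sum_le_sum fun m hm => ?_
  have hm1 := (Finset.mem_Icc.1 hm).1
  have hval : ∀ u ∈ ((Finset.univ : Finset (ZMod q)).filter (fun u => g ∣ parV u)).filter (fun u => parV u / g = m),
      parV u = g * m := by
    intro u hu
    obtain ⟨h1, h2⟩ := Finset.mem_filter.1 hu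
    rw [← h2, Nat.mul_div_cancel' (Finset.mem_filter.1 h1).2]
  have hcard : (((Finset.univ : Finset (ZMod q)).filter (fun u => g ∣ parV u)).filter (fun u => parV u / g = m)).card ≤ 2 := by
    refine le_trans (Finset.card_le_card (t := {(((q - g * m) / 2 : ℕ) : ZMod q), (((q + g * m) / 2 : ℕ) : ZMod q)}) ?_) Finset.card_le_two
    intro u hu
    have h1 := hval u hu
    unfold parV at h1
    rw [Finset.mem_insert, Finset.mem_singleton]
    have : u.val = (q - g * m) / 2 ∨ u.val = (q + g * m) / 2 := by omega
    rcases this with h | h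
    · left; rw [← h, ZMod.natCast_zmod_val]
    · right; rw [← h, ZMod.natCast_zmod_val]
  rw [Finset.sum_congr rfl (g := fun _ => 1 / ((g * m : ℕ) : ℝ)) (fun u hu => by rw [hval u hu]), Finset.sum_const,
    nsmul_eq_mul]
  have hg' : (0 : ℝ) < g := by exact_mod_cast hg
  have hm' : (0 : ℝ) < m := by exact_mod_cast hm1
  calc _ ≤ (2 : ℝ) * (1 / ((g * m : ℕ) : ℝ)) := by
        refine mul_le_mul_of_nonneg_right (by exact_mod_cast hcard) (by positivity)
    _ = _ := by push_cast; field_simp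

theorem gcd_dvd_parV {q : ℕ} [NeZero q] (u : ZMod q) (g : ℕ) (h1 : g ∣ u.val) (h2 : g ∣ q) : g ∣ parV u := by
  unfold parV
  rw [← Int.natCast_dvd]
  exact dvd_sub (Int.natCast_dvd_natCast.2 h2) (Dvd.dvd.mul_left (Int.natCast_dvd_natCast.2 h1) 2)

theorem par_double_sum {q : ℕ} [NeZero q] (hq : Odd q) :
    ∑ u : ZMod q, ∑ w : ZMod q, 1 / (parV u : ℝ) * (1 / (parV w : ℝ)) *
      Real.sqrt (Nat.gcd (Nat.gcd u.val w.val) q) ≤ 4 * (∑ m ∈ Finset.Icc 1 q, 1 / (m : ℝ)) ^ 3 := by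
  set H := ∑ m ∈ Finset.Icc 1 q, 1 / (m : ℝ) with hH
  have hq0 : 0 < q := Nat.pos_of_ne_zero (NeZero.ne q)
  have h1 : ∀ u w : ZMod q, 1 / (parV u : ℝ) * (1 / (parV w : ℝ)) *
      Real.sqrt (Nat.gcd (Nat.gcd u.val w.val) q) ≤ ∑ g ∈ Finset.Icc 1 q, Real.sqrt g *
        ((if g ∣ parV u then 1 / (parV u : ℝ) else 0) * (if g ∣ parV w then 1 / (parV w : ℝ) else 0)) := by
    intro u w
    set G := Nat.gcd (Nat.gcd u.val w.val) q with hG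
    have hGq : G ∣ q := Nat.gcd_dvd_right _ _
    have hmem : G ∈ Finset.Icc 1 q := by
      rw [Finset.mem_Icc]
      exact ⟨Nat.gcd_pos_of_pos_right _ hq0, Nat.le_of_dvd hq0 hGq⟩
    have hGu : G ∣ parV u := gcd_dvd_parV u G ((Nat.gcd_dvd_left _ _).trans (Nat.gcd_dvd_left _ _)) hGq
    have hGw : G ∣ parV w := gcd_dvd_parV w G ((Nat.gcd_dvd_left _ _).trans (Nat.gcd_dvd_right _ _)) hGq
    refine le_trans (le_of_eq ?_) (Finset.single_le_sum (f := fun g : ℕ => Real.sqrt g *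
        ((if g ∣ parV u then 1 / (parV u : ℝ) else 0) * (if g ∣ parV w then 1 / (parV w : ℝ) else 0))) ?_ hmem)
    · simp only [if_pos hGu, if_pos hGw]; ring
    · intro g _
      split_ifs <;> positivity
  calc _ ≤ ∑ u : ZMod q, ∑ w : ZMod q, ∑ g ∈ Finset.Icc 1 q, Real.sqrt g *
        ((if g ∣ parV u then 1 / (parV u : ℝ) else 0) * (if g ∣ parV w then 1 / (parV w : ℝ) else 0)) :=
        Finset.sum_le_sum fun u _ => Finset.sum_le_sum fun w _ => h1 u w
    _ = ∑ g ∈ Finset.Icc 1 q, Real.sqrt g * (∑ u ∈ (Finset.univ : Finset (ZMod q)).filter (fun u => g ∣ parV u), 1 / (parV u : ℝ)) ^ 2 := by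
        simp_rw [Finset.sum_comm (t := Finset.Icc 1 q)]
        refine Finset.sum_congr rfl fun g _ => ?_
        rw [sq, Finset.sum_filter, Finset.sum_mul_sum, Finset.mul_sum]
        refine Finset.sum_congr rfl fun u _ => ?_
        rw [Finset.mul_sum]
    _ ≤ ∑ g ∈ Finset.Icc 1 q, 4 * H ^ 2 * (1 / (g : ℝ)) := by
        refine Finset.sum_le_sum fun g hg => ?_
        have hg1 := (Finset.mem_Icc.1 hg).1
        have hg' : (1 : ℝ) ≤ g := by exact_mod_cast hg1
        have hs := parV_sum hq g hg1
        have hsq : Real.sqrt g ≤ g := by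
          rw [Real.sqrt_le_left (by linarith)]; nlinarith
        have hnn : 0 ≤ ∑ u ∈ (Finset.univ : Finset (ZMod q)).filter (fun u => g ∣ parV u), 1 / (parV u : ℝ) :=
          Finset.sum_nonneg fun _ _ => by positivity
        calc _ ≤ (g : ℝ) * (2 / g * H) ^ 2 := by gcongr
          _ = _ := by field_simp; ring
    _ = _ := by rw [← Finset.mul_sum, ← hH]; ring

theorem par_sum_bound (K : ℕ) (hK : 0 < K) (q : ℕ) [NeZero q] (hq : Odd q) :
    ‖∑ x : (ZMod q)ˣ, parC ((x ^ K : (ZMod q)ˣ) : ZMod q) * parC (((x ^ K)⁻¹ : (ZMod q)ˣ) : ZMod q)‖ ≤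
      4 * (2 * (K : ℝ) ^ 3) ^ (q.primeFactors.card) * Real.sqrt q * (∑ m ∈ Finset.Icc 1 q, 1 / (m : ℝ)) ^ 3 := by
  have h1 : ∑ x : (ZMod q)ˣ, parC ((x ^ K : (ZMod q)ˣ) : ZMod q) * parC (((x ^ K)⁻¹ : (ZMod q)ˣ) : ZMod q) =
      ∑ u : ZMod q, ∑ w : ZMod q, parF u * parF w * klS (ZMod.stdAddChar (N := q)) K u w := by
    have : ∀ u w : ZMod q, parF u * parF w * klS (ZMod.stdAddChar (N := q)) K u w = ∑ x : (ZMod q)ˣ,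
        (parF u * ZMod.stdAddChar (u * ((x ^ K : (ZMod q)ˣ) : ZMod q))) * (parF w * ZMod.stdAddChar (w * (((x ^ K)⁻¹ : (ZMod q)ˣ) : ZMod q))) := by
      intro u w
      unfold klS
      rw [Finset.mul_sum]
      refine Finset.sum_congr (Finset.ext fun _ => by simp) fun x _ => ?_
      rw [AddChar.map_add_eq_mul]; ring
    simp_rw [this]
    simp_rw [Finset.sum_comm (t := (Finset.univ : Finset (ZMod q)ˣ))]
    refine Finset.sum_congr rfl fun x _ => ?_
    rw [parC_expand ((x ^ K : (ZMod q)ˣ) : ZMod q), parC_expand (((x ^ K)⁻¹ : (ZMod q)ˣ) : ZMod q), Finset.sum_mul_sum]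
  rw [h1]
  set D := (2 * (K : ℝ) ^ 3) ^ (q.primeFactors.card) * Real.sqrt q with hD
  have hD0 : 0 ≤ D := by positivity
  calc _ ≤ ∑ u : ZMod q, ∑ w : ZMod q, D * (1 / (parV u : ℝ) * (1 / (parV w : ℝ)) *
      Real.sqrt (Nat.gcd (Nat.gcd u.val w.val) q)) := by
        refine norm_sum_le_of_le _ fun u _ => norm_sum_le_of_le _ fun w _ => ?_
        have hb := klS_bound K hK q hq u.val w.val
        rw [ZMod.natCast_zmod_val, ZMod.natCast_zmod_val, ← hD] at hb
        rw [norm_mul, norm_mul]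
        have e1 := parF_norm hq u
        have e2 := parF_norm hq w
        calc _ ≤ (1 / (parV u : ℝ) * (1 / (parV w : ℝ))) * (D * Real.sqrt (Nat.gcd (Nat.gcd u.val w.val) q)) := by
              gcongr
          _ = _ := by ring
    _ = D * ∑ u : ZMod q, ∑ w : ZMod q, (1 / (parV u : ℝ) * (1 / (parV w : ℝ)) *
      Real.sqrt (Nat.gcd (Nat.gcd u.val w.val) q)) := by simp_rw [Finset.mul_sum]
    _ ≤ D * (4 * (∑ m ∈ Finset.Icc 1 q, 1 / (m : ℝ)) ^ 3) := mul_le_mul_of_nonneg_left (par_double_sum hq) hD0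
    _ = _ := by rw [hD]; ring

theorem omega_pow_bound (C δ : ℝ) (hC : 1 ≤ C) (hδ : 0 < δ) :
    ∃ D : ℝ, 0 < D ∧ ∀ q : ℕ, 0 < q → C ^ (q.primeFactors.card) ≤ D * (q : ℝ) ^ δ := by
  obtain ⟨M, hM⟩ := exists_nat_ge (C ^ (1 / δ))
  have hC0 : 0 < C := by linarith
  refine ⟨C ^ M, by positivity, fun q hq => ?_⟩
  have hbig : ∀ p : ℕ, M ≤ p → C ≤ (p : ℝ) ^ δ := by
    intro p hp
    have h1 : C ^ (1 / δ) ≤ (p : ℝ) := hM.trans (by exact_mod_cast hp)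
    have h2 := Real.rpow_le_rpow (by positivity) h1 hδ.le
    rwa [← Real.rpow_mul hC0.le, one_div_mul_cancel hδ.ne', Real.rpow_one] at h2
  have hsplit := Finset.card_filter_add_card_filter_not (s := q.primeFactors) (fun p => p < M)
  rw [← hsplit, pow_add]
  have hsmall : (q.primeFactors.filter (fun p => p < M)).card ≤ M := by
    calc _ ≤ (Finset.range M).card := Finset.card_le_card fun p hp => by
          rw [Finset.mem_range]; exact (Finset.mem_filter.1 hp).2
      _ = M := Finset.card_range M
  have h2 : C ^ (q.primeFactors.filter (fun p => ¬ p < M)).card ≤ (q : ℝ) ^ δ := by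
    calc _ = ∏ p ∈ q.primeFactors.filter (fun p => ¬ p < M), C := by rw [Finset.prod_const]
      _ ≤ ∏ p ∈ q.primeFactors.filter (fun p => ¬ p < M), (p : ℝ) ^ δ :=
          Finset.prod_le_prod (fun _ _ => hC0.le) fun p hp => hbig p (not_lt.1 (Finset.mem_filter.1 hp).2)
      _ ≤ ∏ p ∈ q.primeFactors, (p : ℝ) ^ δ := by
          refine Finset.prod_le_prod_of_subset_of_one_le (Finset.filter_subset _ _) (fun _ _ => by positivity) fun p hp _ => Real.one_le_rpow (by exact_mod_cast (Nat.prime_of_mem_primeFactors hp).one_le) hδ.le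
      _ = ((∏ p ∈ q.primeFactors, p : ℕ) : ℝ) ^ δ := by
          rw [Nat.cast_prod, Real.finset_prod_rpow _ _ (fun _ _ => by positivity)]
      _ ≤ (q : ℝ) ^ δ := by
          refine Real.rpow_le_rpow (by positivity) ?_ hδ.le
          exact_mod_cast Nat.le_of_dvd hq (Nat.prod_primeFactors_dvd q)
  exact mul_le_mul (pow_le_pow_right₀ hC hsmall) h2 (by positivity) (by positivity)

theorem harm_bound (δ : ℝ) (hδ : 0 < δ) :
    ∃ D : ℝ, 0 < D ∧ ∀ q : ℕ, 0 < q → (∑ m ∈ Finset.Icc 1 q, 1 / (m : ℝ)) ^ 3 ≤ D * (q : ℝ) ^ δ := by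
  refine ⟨(1 + 3 / δ) ^ 3, by positivity, fun q hq => ?_⟩
  have hq1 : (1 : ℝ) ≤ q := by exact_mod_cast hq
  have h1 : ∑ m ∈ Finset.Icc 1 q, 1 / (m : ℝ) ≤ 1 + Real.log q := by
    have := harmonic_le_one_add_log q
    rw [harmonic_eq_sum_Icc] at this
    push_cast at this
    simpa [one_div] using this
  have h2 : Real.log q ≤ (q : ℝ) ^ (δ / 3) / (δ / 3) := Real.log_le_rpow_div (by positivity) (by positivity)
  have h3 : (1 : ℝ) ≤ (q : ℝ) ^ (δ / 3) := Real.one_le_rpow hq1 (by positivity)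
  have h4 : ∑ m ∈ Finset.Icc 1 q, 1 / (m : ℝ) ≤ (1 + 3 / δ) * (q : ℝ) ^ (δ / 3) := by
    have : (q : ℝ) ^ (δ / 3) / (δ / 3) = 3 / δ * (q : ℝ) ^ (δ / 3) := by field_simp
    nlinarith
  calc _ ≤ ((1 + 3 / δ) * (q : ℝ) ^ (δ / 3)) ^ 3 :=
        pow_le_pow_left₀ (Finset.sum_nonneg fun _ _ => by positivity) h4 3
    _ = _ := by
        rw [mul_pow, ← Real.rpow_natCast ((q : ℝ) ^ (δ / 3)), ← Real.rpow_mul (by positivity)]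
        congr 2; push_cast; ring

theorem par_indicator {q : ℕ} (x y : ZMod q) :
    ((if ((x.val : ℤ) ≡ 0 [ZMOD 2] ∧ (y.val : ℤ) ≡ 0 [ZMOD 2]) then (1 : ℂ) else 0) +
      (if ((x.val : ℤ) ≡ 1 [ZMOD 2] ∧ (y.val : ℤ) ≡ 1 [ZMOD 2]) then (1 : ℂ) else 0)) =
      1 / 2 + 1 / 2 * (parC x * parC y) := by
  unfold parC Int.ModEq
  rcases Nat.even_or_odd x.val with hx | hx <;> rcases Nat.even_or_odd y.val with hy | hy <;>
    rw [hx.neg_one_pow, hy.neg_one_pow] <;> simp only [Nat.even_iff, Nat.odd_iff] at hx hy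
  · rw [if_pos (by omega), if_neg (by omega)]; norm_num
  · rw [if_neg (by omega), if_neg (by omega)]; norm_num
  · rw [if_neg (by omega), if_neg (by omega)]; norm_num
  · rw [if_neg (by omega), if_pos (by omega)]; norm_num

/-- **Improved Yi–Zhang asymptotic.** For a fixed nonzero integer `k` and every `ε > 0`
there is `C > 0` such that for every odd `q ≥ 3`,
`|N_q((2,2),(0,0);(k,k)) + N_q((2,2),(1,1);(k,k)) - φ(q)/2| ≤ C q^{1/2+ε}`,
i.e. the number of `n ∈ U_q` for which the least nonnegative residues of `n^k` and
`n^{-k}` modulo `q` have the same parity is `φ(q)/2 + O(q^{1/2+ε})`. -/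
theorem lehmer_same_parity (k : ℤ) (hk : k ≠ 0) :
    ∀ ε : ℝ, 0 < ε → ∃ C : ℝ, 0 < C ∧
      ∀ (q : ℕ) [NeZero q], 3 ≤ q → Odd q →
        |((lehmerCount q ![2, 2] ![0, 0] ![k, -k] : ℝ) +
            (lehmerCount q ![2, 2] ![1, 1] ![k, -k] : ℝ)) - (Nat.totient q : ℝ) / 2| ≤
          C * (q : ℝ) ^ ((1 : ℝ) / 2 + ε) := by
  intro ε hε
  have hK : 0 < k.natAbs := Int.natAbs_pos.2 hk
  have hK1 : (1 : ℝ) ≤ (k.natAbs : ℝ) := by exact_mod_cast hK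
  obtain ⟨D1, hD1, h1⟩ := omega_pow_bound (2 * (k.natAbs : ℝ) ^ 3) (ε / 2)
    (by nlinarith [one_le_pow₀ (n := 3) hK1]) (by positivity)
  obtain ⟨D2, hD2, h2⟩ := harm_bound (ε / 2) (by positivity)
  refine ⟨2 * D1 * D2, by positivity, fun q _ hq3 hodd => ?_⟩
  have hq0 : 0 < q := by omega
  have hqr : (0 : ℝ) < q := by exact_mod_cast hq0
  have hc : ∀ a : ℤ, ((lehmerCount q ![2, 2] ![a, a] ![k, -k] : ℕ) : ℂ) = ∑ n : (ZMod q)ˣ,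
      (if (((((n ^ k : (ZMod q)ˣ) : ZMod q).val : ℤ) ≡ a [ZMOD 2]) ∧
        ((((n ^ k)⁻¹ : (ZMod q)ˣ) : ZMod q).val : ℤ) ≡ a [ZMOD 2]) then (1 : ℂ) else 0) := by
    intro a
    unfold lehmerCount
    rw [Finset.sum_boole]
    congr 2
    refine Finset.filter_congr fun n _ => ?_
    rw [Fin.forall_fin_two]
    simp only [Matrix.cons_val_zero, Matrix.cons_val_one, zpow_neg]
    rfl
  have hsum : ∑ n : (ZMod q)ˣ, parC ((n ^ k : (ZMod q)ˣ) : ZMod q) * parC (((n ^ k)⁻¹ : (ZMod q)ˣ) : ZMod q) =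
      ∑ x : (ZMod q)ˣ, parC ((x ^ k.natAbs : (ZMod q)ˣ) : ZMod q) * parC (((x ^ k.natAbs)⁻¹ : (ZMod q)ˣ) : ZMod q) := by
    refine Finset.sum_congr rfl fun n _ => ?_
    rcases Int.natAbs_eq k with h | h
    · have : n ^ k = n ^ k.natAbs := by
        conv_lhs => rw [h]
        exact zpow_natCast _ _
      rw [this]
    · have : n ^ k = (n ^ k.natAbs)⁻¹ := by
        conv_lhs => rw [h]
        rw [zpow_neg, zpow_natCast]
      rw [this, inv_inv, mul_comm]
  have hb := par_sum_bound k.natAbs hK q hodd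
  set S := ∑ x : (ZMod q)ˣ, parC ((x ^ k.natAbs : (ZMod q)ˣ) : ZMod q) * parC (((x ^ k.natAbs)⁻¹ : (ZMod q)ˣ) : ZMod q) with hS
  have key : (((lehmerCount q ![2, 2] ![0, 0] ![k, -k] : ℝ) +
            (lehmerCount q ![2, 2] ![1, 1] ![k, -k] : ℝ)) - (Nat.totient q : ℝ) / 2 : ℝ) = (1 / 2 * S : ℂ) := by
    push_cast
    rw [hc 0, hc 1, ← Finset.sum_add_distrib, Finset.sum_congr rfl (fun n _ => par_indicator _ _),
      Finset.sum_add_distrib, ← Finset.mul_sum, hsum, Finset.sum_const, Finset.card_univ, nsmul_eq_mul]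
    have : Fintype.card (ZMod q)ˣ = Nat.totient q := by
      rw [← ZMod.card_units_eq_totient]
    rw [this]; ring
  rw [← Real.norm_eq_abs, ← Complex.norm_real, key, norm_mul]
  have e1 : Real.sqrt q = (q : ℝ) ^ ((1 : ℝ) / 2) := Real.sqrt_eq_rpow _
  have e2 : (q : ℝ) ^ ((1 : ℝ) / 2 + ε) = (q : ℝ) ^ ((1 : ℝ) / 2) * ((q : ℝ) ^ (ε / 2) * (q : ℝ) ^ (ε / 2)) := by
    rw [← Real.rpow_add hqr, ← Real.rpow_add hqr]; congr 1; ring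
  have hn : ‖(1 / 2 : ℂ)‖ = 1 / 2 := by norm_num
  rw [hn]
  calc 1 / 2 * ‖S‖ ≤ 1 / 2 * (4 * (D1 * (q : ℝ) ^ (ε / 2)) * Real.sqrt q * (D2 * (q : ℝ) ^ (ε / 2))) := by
        refine mul_le_mul_of_nonneg_left (hb.trans ?_) (by norm_num)
        have := h1 q hq0
        have := h2 q hq0
        have : 0 ≤ ∑ m ∈ Finset.Icc 1 q, 1 / (m : ℝ) := Finset.sum_nonneg fun _ _ => by positivity
        gcongr
    _ = _ := by rw [e1, e2]; ring
end

section
/- Let q ≥ 2, let s ≥ 2, let k = (k_1, …, k_s) be a vector of nonzero integers, let m_1, …, m_s ≥ 1 be integers with gcd(m_j, q) = 1 for all j, and let a_1, …, a_s be integers with 0 ≤ a_j < m_j. For each j, let U_j be the largest integer U with m_j U + a_j < q, let r_j ∈ U_q be the modular inverse of m_j modulo q, and let b_j ∈ {0, 1, …, q−1} satisfy b_j ≡ a_j r_j (mod q). Then N_q(m, a; k) equals the number of tuples (n, u_1, …, u_s) with n ∈ U_q and 0 ≤ u_j ≤ U_j for all j satisfying the system of congruences r_j n^{k_j} ≡ u_j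 + b_j (mod q) for j = 1, …, s. -/
open scoped Classical

/-- For `0 ≤ x < q` and `0 ≤ u ≤ U`, the congruence `r x ≡ u + b` means `x = m u + a`. -/
lemma lehmer_congr_iff (q m r b : ℕ) (a U x u : ℤ)
    (ha : 0 ≤ a) (hU : (m : ℤ) * U + a < q) (hr : m * r ≡ 1 [MOD q])
    (hb : (b : ℤ) ≡ a * (r : ℤ) [ZMOD (q : ℤ)])
    (hx0 : 0 ≤ x) (hxq : x < q) (hu0 : 0 ≤ u) (huU : u ≤ U) :
    ((r : ℤ) * x ≡ u + b [ZMOD (q : ℤ)]) ↔ x = m * u + a := by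
  have hr' : (m : ℤ) * r ≡ 1 [ZMOD (q : ℤ)] := by
    exact_mod_cast (Int.natCast_modEq_iff.mpr hr)
  obtain ⟨c, hc⟩ := hr'.dvd
  obtain ⟨d, hd⟩ := hb.dvd
  constructor
  · intro h
    obtain ⟨e, he⟩ := h.dvd
    have h2 : x ≡ m * u + a [ZMOD (q : ℤ)] := by
      apply Int.modEq_iff_dvd.mpr
      refine ⟨m * e + m * d + a * c - x * c, ?_⟩
      linear_combination (m : ℤ) * he + (m : ℤ) * hd + (a - x) * hc
    have hm : (m : ℤ) * u ≤ m * U := mul_le_mul_of_nonneg_left huU (by positivity)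
    have hm0 : 0 ≤ (m : ℤ) * u := by positivity
    have h3 : x % q = (m * u + a) % q := h2
    rwa [Int.emod_eq_of_lt hx0 hxq, Int.emod_eq_of_lt (by linarith) (by linarith)] at h3
  · rintro rfl
    apply Int.modEq_iff_dvd.mpr
    refine ⟨u * c - d, ?_⟩
    linear_combination u * hc - hd

/-- **Reformulation of `N_q(m, a; k)` as a counting problem for a system of
congruences.** Let `q ≥ 2`, `s ≥ 2`, let `k_j` be nonzero integers, `m_j ≥ 1` coprime
to `q` and `0 ≤ a_j < m_j`. For each `j`, let `U_j` be the largest integer `U` with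
`m_j U + a_j < q`, let `r_j ∈ U_q` be the modular inverse of `m_j` modulo `q`, and let
`0 ≤ b_j < q` satisfy `b_j ≡ a_j r_j (mod q)`. Then `N_q(m, a; k)` equals the number of
tuples `(n, u_1, …, u_s)` with `n ∈ U_q`, `0 ≤ u_j ≤ U_j`, and
`r_j n^{k_j} ≡ u_j + b_j (mod q)` for all `j`. -/
theorem lehmerCount_eq_card_congruence_system
    (q : ℕ) [NeZero q] (hq : 2 ≤ q) (s : ℕ) (hs : 2 ≤ s)
    (k : Fin s → ℤ) (hk : ∀ j, k j ≠ 0)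
    (m : Fin s → ℕ) (hm1 : ∀ j, 1 ≤ m j) (hmq : ∀ j, Nat.Coprime (m j) q)
    (a : Fin s → ℤ) (ha : ∀ j, 0 ≤ a j ∧ a j < (m j : ℤ))
    (U : Fin s → ℤ)
    (hU : ∀ j, (m j : ℤ) * U j + a j < (q : ℤ) ∧
      ∀ V : ℤ, (m j : ℤ) * V + a j < (q : ℤ) → V ≤ U j)
    (r : Fin s → ℕ) (hr : ∀ j, 1 ≤ r j ∧ r j < q ∧ m j * r j ≡ 1 [MOD q])
    (b : Fin s → ℕ) (hb : ∀ j, b j < q ∧ (b j : ℤ) ≡ a j * (r j : ℤ) [ZMOD (q : ℤ)]) :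
    lehmerCount q m a k =
      ((Finset.univ ×ˢ Fintype.piFinset fun j => Finset.Icc (0 : ℤ) (U j)).filter
        fun nu : (ZMod q)ˣ × (Fin s → ℤ) =>
          ∀ j, (r j : ℤ) * (((nu.1 ^ k j : (ZMod q)ˣ) : ZMod q).val : ℤ) ≡
            nu.2 j + (b j : ℤ) [ZMOD (q : ℤ)]).card := by
  have hx0 : ∀ (n : (ZMod q)ˣ) j, (0 : ℤ) ≤ (((n ^ k j : (ZMod q)ˣ) : ZMod q).val : ℤ) :=
    fun n j => Int.natCast_nonneg _
  have hxq : ∀ (n : (ZMod q)ˣ) j, (((n ^ k j : (ZMod q)ˣ) : ZMod q).val : ℤ) < (q : ℤ) :=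
    fun n j => by exact_mod_cast ZMod.val_lt _
  have hm0 : ∀ j, (0 : ℤ) < m j := fun j => by exact_mod_cast hm1 j
  unfold lehmerCount
  symm
  apply Finset.card_bij (fun nu _ => nu.1)
  · rintro ⟨n, u⟩ h
    simp only [Finset.mem_filter, Finset.mem_product, Finset.mem_univ, true_and,
      Fintype.mem_piFinset, Finset.mem_Icc] at h ⊢
    intro j
    rw [(lehmer_congr_iff q (m j) (r j) (b j) (a j) (U j) _ (u j) (ha j).1 (hU j).1 (hr j).2.2
      (hb j).2 (hx0 n j) (hxq n j) (h.1 j).1 (h.1 j).2).mp (h.2 j)]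
    apply Int.modEq_iff_dvd.mpr
    exact ⟨-u j, by ring⟩
  · rintro ⟨n, u⟩ h ⟨n', v⟩ h' hn
    simp only at hn
    subst hn
    simp only [Finset.mem_filter, Finset.mem_product, Finset.mem_univ, true_and,
      Fintype.mem_piFinset, Finset.mem_Icc] at h h'
    congr 1
    funext j
    have e1 := (lehmer_congr_iff q (m j) (r j) (b j) (a j) (U j) _ (u j) (ha j).1 (hU j).1
      (hr j).2.2 (hb j).2 (hx0 n j) (hxq n j) (h.1 j).1 (h.1 j).2).mp (h.2 j)
    have e2 := (lehmer_congr_iff q (m j) (r j) (b j) (a j) (U j) _ (v j) (ha j).1 (hU j).1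
      (hr j).2.2 (hb j).2 (hx0 n j) (hxq n j) (h'.1 j).1 (h'.1 j).2).mp (h'.2 j)
    exact mul_left_cancel₀ (hm0 j).ne' (by linarith)
  · intro n h
    simp only [Finset.mem_filter, Finset.mem_univ, true_and] at h
    choose u hu using fun j => (h j).symm.dvd
    have hu' : ∀ j, (((n ^ k j : (ZMod q)ˣ) : ZMod q).val : ℤ) = m j * u j + a j :=
      fun j => by linarith [hu j]
    have hu0 : ∀ j, 0 ≤ u j := by
      intro j
      by_contra hlt
      push Not at hlt
      have h1 := hx0 n j
      rw [hu' j] at h1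
      nlinarith [hm0 j, (ha j).2]
    have huU : ∀ j, u j ≤ U j := fun j => (hU j).2 _ (by rw [← hu' j]; exact hxq n j)
    refine ⟨(n, u), ?_, rfl⟩
    simp only [Finset.mem_filter, Finset.mem_product, Finset.mem_univ, true_and,
      Fintype.mem_piFinset, Finset.mem_Icc]
    exact ⟨fun j => ⟨hu0 j, huU j⟩, fun j => (lehmer_congr_iff q (m j) (r j) (b j) (a j) (U j) _
      (u j) (ha j).1 (hU j).1 (hr j).2.2 (hb j).2 (hx0 n j) (hxq n j) (hu0 j) (huU j)).mpr
      (hu' j)⟩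
end
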